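/- Let n ≥ 3 and r ≥ 3 be integers. There exists a constant c > 0 such that for every odd prime power q, Σ_{S ∈ M_n(𝔽_q), S ≠ 0} q^{r(n² + ρ_S)/2} ≤ c·q^{rn² − (n−1)(r−2)}, where ρ_S is the radical invariant of S. (Consequently the sums Σ_{S ≠ 0} ψ(−ST)·G(S,0)^r and Σ_{S ≠ 0} ψ(−ST)·Π_{i=1}^r G(S,−M_i) over M_n(𝔽_q) are O(q^{rn² − (n−1)(r−2)}).) -/

import Mathlib

open scoped BigOperators

/-- The additive character `ψ(X) = exp((2πi/p)·Tr_{F/F_p}(Tr X))` on `n × n` matrices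
over a finite field `F` of characteristic `p`. -/
noncomputable def psi (F : Type) [Field F] [Fintype F] {n : ℕ}
    (X : Matrix (Fin n) (Fin n) F) : ℂ :=
  letI : Algebra (ZMod (ringChar F)) F := ZMod.algebra _ _
  Complex.exp (2 * Real.pi * Complex.I *
    (((Algebra.trace (ZMod (ringChar F)) F X.trace).val : ℂ) / (ringChar F : ℂ)))

/-- The radical `{X : Tr(A(XY+YX)) = 0 for all Y}` of the quadratic form
`X ↦ Tr(AX²)` on `M_n(F)`. -/
def radical (F : Type) [Field F] [Fintype F] {n : ℕ}
    (A : Matrix (Fin n) (Fin n) F) : Submodule F (Matrix (Fin n) (Fin n) F) where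
  carrier := {X : Matrix (Fin n) (Fin n) F |
    ∀ Y : Matrix (Fin n) (Fin n) F, (A * (X * Y + Y * X)).trace = 0}
  zero_mem' := by intro Y; simp
  add_mem' := by
    intro X₁ X₂ h₁ h₂ Y
    have e : A * ((X₁ + X₂) * Y + Y * (X₁ + X₂))
        = A * (X₁ * Y + Y * X₁) + A * (X₂ * Y + Y * X₂) := by noncomm_ring
    show (A * ((X₁ + X₂) * Y + Y * (X₁ + X₂))).trace = 0
    rw [e, Matrix.trace_add, h₁ Y, h₂ Y, add_zero]
  smul_mem' := by
    intro c X h Y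
    have e : A * ((c • X) * Y + Y * (c • X)) = c • (A * (X * Y + Y * X)) := by
      rw [smul_mul_assoc, Matrix.mul_smul, ← smul_add, Matrix.mul_smul]
    show (A * ((c • X) * Y + Y * (c • X))).trace = 0
    rw [e, Matrix.trace_smul, h Y, smul_zero]

/-- The radical invariant `ρ_A`: the `F`-dimension of the radical of `X ↦ Tr(AX²)`. -/
noncomputable def rho (F : Type) [Field F] [Fintype F] {n : ℕ}
    (A : Matrix (Fin n) (Fin n) F) : ℕ :=
  Module.finrank F (radical F A)

/-- The quadratic matrix Gauss sum `G(A,B) = Σ_X ψ(AX² + BX)`. -/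
noncomputable def matGaussSum (F : Type) [Field F] [Fintype F] {n : ℕ}
    (A B : Matrix (Fin n) (Fin n) F) : ℂ :=
  ∑ X : Matrix (Fin n) (Fin n) F, psi F (A * X ^ 2 + B * X)

/-- The matrix sphere `σ_T = {X ∈ M_n(F)^r : X₁² + ⋯ + X_r² = T}`. -/
def matSphere (F : Type) [Field F] [Fintype F] [DecidableEq F] {n : ℕ} (r : ℕ)
    (T : Matrix (Fin n) (Fin n) F) : Finset (Fin r → Matrix (Fin n) (Fin n) F) :=
  Finset.univ.filter (fun X => ∑ i, (X i) ^ 2 = T)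

/-- The Fourier transform `f̂(M) = q^{-rn²} Σ_A f(A) conj(ψ(M·A))` on `M_n(F)^r`. -/
noncomputable def matFourier (F : Type) [Field F] [Fintype F] {n r : ℕ}
    (f : (Fin r → Matrix (Fin n) (Fin n) F) → ℂ)
    (M : Fin r → Matrix (Fin n) (Fin n) F) : ℂ :=
  ((Fintype.card F : ℂ) ^ (r * n ^ 2))⁻¹ *
    ∑ A : Fin r → Matrix (Fin n) (Fin n) F, f A * (starRingEnd ℂ) (psi F (∑ i, M i * A i))

/-!
The radical of `X ↦ Tr (A X²)` is the space of `X` with `-A X = X A`, that is, the space of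
`K[X]`-linear maps between the modules `K ^ n` on which the variable acts by `A` and by `-A`.
Decomposing both into cyclic modules turns its dimension `ρ` into a sum of degrees of gcds, and
Cauchy-Schwarz for such sums gives `ρ ≤ dim C(A)`. Hence `ρ ≤ n² - 2n + 2` for `A ≠ 0`, which
reduces the theorem to `r = 3`.

For invertible `A` the spaces `C(A)` and `{X | -A X = X A}` are the eigenspaces of conjugation by
`A` on `C(A²)`. If `A²` is scalar, then `dim C(A) = n² - ρ` is at least half of `n²`, and few
conjugacy classes occur. Otherwise `2 ρ ≤ dim C(A²) ≤ n² - 2n + 2`, and `∑ q ^ ρ` is estimated by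
counting the pairs `(A, X)` with `-A X = X A` the other way round: `X` is conjugate to `-X`, so its
characteristic polynomial is even or odd, which leaves at most `q ^ ⌊n / 2⌋` such polynomials.

A matrix `A` of rank `k` factors as `P Q` through `K ^ k`, and its `ρ` exceeds that of the
`k × k` matrix `Q P` by at most `(n - k)²`.
-/

universe u

open Polynomial Module UniqueFactorizationMonoid

variable {K : Type*} [Field K]

section CyclicModules

/-- A homomorphism out of the cyclic module `K[X] / (a)` is the choice of an `a`-torsion element,
the image of `1`. -/
noncomputable def homQuotientSpanEquivKer (N : Type*) [AddCommGroup N] [Module K N] [Module K[X] N]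
    [IsScalarTower K K[X] N] (a : K[X]) :
    ((K[X] ⧸ Ideal.span {a}) →ₗ[K[X]] N) ≃ₗ[K]
      ((LinearMap.lsmul K[X] N a).restrictScalars K).ker :=
  LinearEquiv.ofBijective
    { toFun f := ⟨f 1, by
        change a • f (Submodule.Quotient.mk 1) = 0
        rw [← map_smul, ← Submodule.Quotient.mk_smul, (Submodule.Quotient.mk_eq_zero _).2, map_zero]
        simp⟩
      map_add' _ _ := rfl
      map_smul' _ _ := rfl }
    ⟨fun _ _ h => Submodule.linearMap_qext _ (LinearMap.ext_ring (congrArg Subtype.val h)),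
      fun x => ⟨(Ideal.span {a}).liftQ (LinearMap.toSpanSingleton K[X] N x) (by
        rw [Ideal.span, Submodule.span_le, Set.singleton_subset_iff]
        exact x.2), Subtype.ext (one_smul K[X] (x : N))⟩⟩

theorem finrank_hom_quotient_span {N : Type*} [AddCommGroup N] [Module K N] [Module K[X] N]
    [IsScalarTower K K[X] N] [FiniteDimensional K N] (a : K[X]) :
    finrank K ((K[X] ⧸ Ideal.span {a}) →ₗ[K[X]] N) =
      finrank K (N ⧸ (LinearMap.lsmul K[X] N a).range) := by
  let μ : N →ₗ[K] N := (LinearMap.lsmul K[X] N a).restrictScalars K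
  have hker := μ.finrank_range_add_finrank_ker
  have hcoker := μ.range.finrank_quotient_add_finrank
  rw [(homQuotientSpanEquivKer N a).finrank_eq]
  change finrank K μ.ker = finrank K (N ⧸ μ.range)
  omega

theorem finrank_hom_quotient_quotient [DecidableEq K] (a : K[X]) {b : K[X]} (hb : b.Monic) :
    finrank K ((K[X] ⧸ Ideal.span {a}) →ₗ[K[X]] (K[X] ⧸ Ideal.span {b})) =
      (EuclideanDomain.gcd a b).natDegree := by
  have := hb.finite_quotient
  have hrange : (LinearMap.lsmul K[X] (K[X] ⧸ Ideal.span {b}) a).range =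
      Submodule.map (Ideal.span {b}).mkQ (Ideal.span {a}) := by
    ext x
    constructor
    · rintro ⟨y, rfl⟩
      obtain ⟨p, rfl⟩ := Submodule.mkQ_surjective _ y
      exact ⟨a * p, Ideal.mul_mem_right _ _ (Ideal.mem_span_singleton_self a), rfl⟩
    · rintro ⟨_, hy, rfl⟩
      obtain ⟨p, rfl⟩ := Ideal.mem_span_singleton'.1 hy
      exact ⟨(Ideal.span {b}).mkQ p, by simp [mul_comm p a]; rfl⟩
  rw [finrank_hom_quotient_span, hrange,
    ((Submodule.quotientQuotientEquivQuotientSup _ _).restrictScalars K).finrank_eq,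
    ← Ideal.span_union, Set.singleton_union, Set.pair_comm, ← EuclideanDomain.span_gcd,
    finrank_quotient_span_eq_natDegree]

theorem finrank_hom_pi_quotient [DecidableEq K] {ι κ : Type*} [Fintype ι] [Fintype κ]
    (a : ι → K[X]) {b : κ → K[X]} (hb : ∀ j, (b j).Monic) :
    finrank K ((∀ i, K[X] ⧸ Ideal.span {a i}) →ₗ[K[X]] ∀ j, K[X] ⧸ Ideal.span {b j}) =
      ∑ i, ∑ j, (EuclideanDomain.gcd (a i) (b j)).natDegree := by
  classical
  have (j : κ) := (hb j).finite_quotient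
  have (i : ι) (j : κ) := Module.Finite.equiv
    (homQuotientSpanEquivKer (K[X] ⧸ Ideal.span {b j}) (a i)).symm
  have (i : ι) (j : κ) := Module.Free.of_equiv
    (homQuotientSpanEquivKer (K[X] ⧸ Ideal.span {b j}) (a i)).symm
  let e (i : ι) := LinearEquiv.linearMapPi (R := K[X]) (M₂ := K[X] ⧸ Ideal.span {a i})
    (φ := fun j => K[X] ⧸ Ideal.span {b j}) K
  have (i : ι) := Module.Finite.equiv (e i)
  have (i : ι) := Module.Free.of_equiv (e i)
  rw [← (LinearMap.lsum K[X] (fun i => K[X] ⧸ Ideal.span {a i}) K).finrank_eq,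
    finrank_pi_fintype]
  refine Finset.sum_congr rfl fun i _ => ?_
  rw [← (e i).finrank_eq, finrank_pi_fintype]
  exact Finset.sum_congr rfl fun j _ => finrank_hom_quotient_quotient _ (hb j)

end CyclicModules

section GcdDegrees

variable {ι κ : Type*} [Fintype ι] [Fintype κ]

theorem sum_min_eq_sum_card_mul_card (f : ι → ℕ) (g : κ → ℕ) {N : ℕ} (hf : ∀ i, f i ≤ N) :
    ∑ i, ∑ j, min (f i) (g j) =
      ∑ k ∈ Finset.range N, Fintype.card {i // k < f i} * Fintype.card {j // k < g j} := by
  have hmin (i : ι) (j : κ) : min (f i) (g j) =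
      ∑ k ∈ Finset.range N, (if k < f i then 1 else 0) * (if k < g j then 1 else 0) := by
    have : (Finset.range N).filter (fun k => k < f i ∧ k < g j) =
        Finset.range (min (f i) (g j)) := by
      ext k
      have := hf i
      simp only [Finset.mem_filter, Finset.mem_range]
      omega
    rw [← Finset.card_range (min (f i) (g j)), ← this, Finset.card_filter]
    simp only [← ite_and, mul_ite, mul_one, mul_zero, and_comm]
  simp_rw [hmin, Fintype.card_subtype, Finset.card_filter, Finset.sum_mul_sum]
  simp_rw [Finset.sum_comm (t := Finset.range N)]

theorem two_mul_sum_min_le (f : ι → ℕ) (g : κ → ℕ) :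
    2 * ∑ i, ∑ j, min (f i) (g j) ≤
      ∑ i, ∑ i', min (f i) (f i') + ∑ j, ∑ j', min (g j) (g j') := by
  obtain ⟨N, hN⟩ := (Set.finite_range (Sum.elim f g)).bddAbove
  have hf (i : ι) : f i ≤ N := hN ⟨Sum.inl i, rfl⟩
  have hg (j : κ) : g j ≤ N := hN ⟨Sum.inr j, rfl⟩
  rw [sum_min_eq_sum_card_mul_card f g hf, sum_min_eq_sum_card_mul_card f f hf,
    sum_min_eq_sum_card_mul_card g g hg, Finset.mul_sum, ← Finset.sum_add_distrib]
  refine Finset.sum_le_sum fun k _ => ?_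
  simpa only [pow_two, mul_assoc] using
    two_mul_le_add_sq (Fintype.card {i // k < f i}) (Fintype.card {j // k < g j})

variable [DecidableEq K]

theorem natDegree_eq_sum_count {a : K[X]} (ha : a ≠ 0) {T : Finset K[X]}
    (hT : ∀ p ∈ normalizedFactors a, p ∈ T) :
    a.natDegree = ∑ p ∈ T, (normalizedFactors a).count p * p.natDegree := by
  rw [← natDegree_eq_of_degree_eq (degree_eq_degree_of_associated (prod_normalizedFactors ha)),
    natDegree_multiset_prod _ (zero_notMem_normalizedFactors a), Finset.sum_multiset_map_count]
  refine Finset.sum_subset (fun p hp => hT p (Multiset.mem_toFinset.1 hp)) fun p _ hp => ?_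
  rw [Multiset.count_eq_zero_of_notMem (mt Multiset.mem_toFinset.2 hp), zero_smul]

theorem normalizedFactors_gcd {a b : K[X]} (ha : a ≠ 0) (hb : b ≠ 0) :
    normalizedFactors (EuclideanDomain.gcd a b) = normalizedFactors a ∩ normalizedFactors b := by
  have hab : EuclideanDomain.gcd a b ≠ 0 := fun h => ha (EuclideanDomain.gcd_eq_zero_iff.1 h).1
  refine le_antisymm (Multiset.le_inter ?_ ?_) (Multiset.le_iff_count.2 fun p => ?_)
  · exact (dvd_iff_normalizedFactors_le_normalizedFactors hab ha).1
      (EuclideanDomain.gcd_dvd_left a b)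
  · exact (dvd_iff_normalizedFactors_le_normalizedFactors hab hb).1
      (EuclideanDomain.gcd_dvd_right a b)
  by_cases hp : p ∈ normalizedFactors a
  · have pow_dvd {c : K[X]} (hc : c ≠ 0) (k : ℕ) :
        p ^ k ∣ c ↔ k ≤ (normalizedFactors c).count p := by
      rw [pow_dvd_iff_le_emultiplicity, emultiplicity_eq_count_normalizedFactors
        (irreducible_of_normalized_factor p hp) hc, normalize_normalized_factor p hp, Nat.cast_le]
    rw [← pow_dvd hab, Multiset.count_inter]
    exact EuclideanDomain.dvd_gcd ((pow_dvd ha _).2 (min_le_left _ _))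
      ((pow_dvd hb _).2 (min_le_right _ _))
  · simp [Multiset.count_inter, Multiset.count_eq_zero_of_notMem hp]

theorem natDegree_gcd_eq_sum {a b : K[X]} (ha : a ≠ 0) (hb : b ≠ 0) {T : Finset K[X]}
    (hT : ∀ p ∈ normalizedFactors a, p ∈ T) :
    (EuclideanDomain.gcd a b).natDegree =
      ∑ p ∈ T, min ((normalizedFactors a).count p) ((normalizedFactors b).count p) *
        p.natDegree := by
  have hab : EuclideanDomain.gcd a b ≠ 0 := fun h => ha (EuclideanDomain.gcd_eq_zero_iff.1 h).1
  rw [natDegree_eq_sum_count hab (T := T), normalizedFactors_gcd ha hb]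
  · simp only [Multiset.count_inter]
  · rw [normalizedFactors_gcd ha hb]
    exact fun p hp => hT p (Multiset.mem_inter.1 hp).1

theorem two_mul_sum_natDegree_gcd_le {a : ι → K[X]} {b : κ → K[X]} (ha : ∀ i, a i ≠ 0)
    (hb : ∀ j, b j ≠ 0) :
    2 * ∑ i, ∑ j, (EuclideanDomain.gcd (a i) (b j)).natDegree ≤
      ∑ i, ∑ i', (EuclideanDomain.gcd (a i) (a i')).natDegree +
        ∑ j, ∑ j', (EuclideanDomain.gcd (b j) (b j')).natDegree := by
  let T := (∑ i, normalizedFactors (a i) + ∑ j, normalizedFactors (b j)).toFinset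
  have hTa (i : ι) : ∀ p ∈ normalizedFactors (a i), p ∈ T := fun p hp =>
    Multiset.mem_toFinset.2 (Multiset.mem_add.2 (Or.inl
      (Multiset.mem_sum.2 ⟨i, Finset.mem_univ i, hp⟩)))
  have hTb (j : κ) : ∀ p ∈ normalizedFactors (b j), p ∈ T := fun p hp =>
    Multiset.mem_toFinset.2 (Multiset.mem_add.2 (Or.inr
      (Multiset.mem_sum.2 ⟨j, Finset.mem_univ j, hp⟩)))
  simp_rw [fun i j => natDegree_gcd_eq_sum (ha i) (hb j) (hTa i),
    fun i j => natDegree_gcd_eq_sum (ha i) (ha j) (hTa i),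
    fun i j => natDegree_gcd_eq_sum (hb i) (hb j) (hTb i), Finset.sum_comm (t := T),
    ← Finset.sum_mul]
  rw [Finset.mul_sum, ← Finset.sum_add_distrib]
  refine Finset.sum_le_sum fun p _ => ?_
  rw [← mul_assoc, ← add_mul]
  exact Nat.mul_le_mul_right _ (two_mul_sum_min_le _ _)

end GcdDegrees

section Intertwiners

variable {m n : Type*} [Fintype m] [Fintype n]

/-- The space of matrices `X` with `B * X = X * A`. In particular `intertwiners A A` is the
centralizer of `A`, and `intertwiners A (-A)` is the radical of `X ↦ Tr (A * X ^ 2)`. -/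
def intertwiners (A : Matrix m m K) (B : Matrix n n K) : Submodule K (Matrix n m K) where
  carrier := {X | B * X = X * A}
  zero_mem' := (Matrix.mul_zero B).trans (Matrix.zero_mul A).symm
  add_mem' {X Y} hX hY :=
    (Matrix.mul_add B X Y).trans ((congrArg₂ (· + ·) hX hY).trans (Matrix.add_mul X Y A).symm)
  smul_mem' c X hX :=
    (Matrix.mul_smul B c X).trans ((congrArg (c • ·) hX).trans (Matrix.smul_mul c X A).symm)

theorem mem_intertwiners {A : Matrix m m K} {B : Matrix n n K} {X : Matrix n m K} :
    X ∈ intertwiners A B ↔ B * X = X * A := Iff.rfl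

variable [DecidableEq m] [DecidableEq n]

theorem mem_intertwiners_iff_toLin' {A : Matrix m m K} {B : Matrix n n K} {X : Matrix n m K} :
    X ∈ intertwiners A B ↔ ∀ v, B.toLin' (X.toLin' v) = X.toLin' (A.toLin' v) := by
  simp only [← LinearMap.comp_apply, ← Matrix.toLin'_mul, ← LinearMap.ext_iff,
    Matrix.toLin'.injective.eq_iff, mem_intertwiners]

theorem finrank_intertwiners_eq_finrank_hom (A : Matrix m m K) (B : Matrix n n K) :
    finrank K (intertwiners A B) = finrank K (AEval' A.toLin' →ₗ[K[X]] AEval' B.toLin') := by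
  let a := AEval'.of A.toLin'
  let b := AEval'.of B.toLin'
  refine LinearEquiv.finrank_eq (LinearEquiv.ofBijective
    { toFun X := LinearMap.ofAEval _ (b.toLinearMap ∘ₗ X.1.toLin') fun v =>
        (congrArg b (mem_intertwiners_iff_toLin'.1 X.2 v).symm).trans (AEval'.X_smul_of _ _).symm
      map_add' X Y := by ext; simp [LinearMap.ofAEval]
      map_smul' c X := by ext; simp [LinearMap.ofAEval] } ⟨fun X Y h => ?_, fun f => ?_⟩)
  · exact Subtype.ext (Matrix.toLin'.injective
      (LinearMap.ext fun v => b.injective (LinearMap.congr_fun h (a v))))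
  · refine ⟨⟨(b.symm.toLinearMap ∘ₗ f.restrictScalars K ∘ₗ a.toLinearMap).toMatrix', ?_⟩, ?_⟩
    · refine mem_intertwiners_iff_toLin'.2 fun v => ?_
      simp only [Matrix.toLin'_toMatrix', LinearMap.comp_apply, LinearEquiv.coe_toLinearMap,
        LinearMap.restrictScalars_apply]
      rw [← AEval'.X_smul_of, map_smul, AEval'.of_symm_X_smul]
    · ext v
      simp [LinearMap.ofAEval, a, b]

end Intertwiners

section InvariantFactors

variable {n : Type*} [Fintype n] [DecidableEq n]

theorem exists_aeval_equiv_pi_quotient (A : Matrix n n K) :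
    ∃ d : n → K[X], (∀ i, (d i).Monic) ∧
      Nonempty (AEval' A.toLin' ≃ₗ[K[X]] ∀ i, K[X] ⧸ Ideal.span {d i}) := by
  classical
  let M := AEval' A.toLin'
  let π : (n → K[X]) →ₗ[K[X]] M :=
    Fintype.linearCombination K[X] fun i => AEval'.of A.toLin' (Pi.single i 1)
  have hπ : Function.Surjective π := by
    intro x
    obtain ⟨v, rfl⟩ := (AEval'.of A.toLin').surjective x
    refine ⟨fun i => C (v i), ?_⟩
    conv_rhs => rw [pi_eq_sum_univ' v, map_sum]
    exact Finset.sum_congr rfl fun i _ => (AEval.C_smul _ _ _).trans (map_smul _ _ _).symm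
  have htors : IsTorsion K[X] M := AEval.isTorsion_of_finiteDimensional K (n → K) A.toLin'
  have hrank : finrank K[X] π.ker = finrank K[X] (n → K[X]) := by
    have h := π.ker.finrank_quotient_add_finrank
    rwa [(π.quotKerEquivOfSurjective hπ).finrank_eq, finrank_eq_zero_iff_isTorsion.2 htors,
      zero_add] at h
  let b := Pi.basisFun K[X] n
  let a := Submodule.smithNormalFormCoeffs b hrank
  have ha (i : n) : a i ≠ 0 := Submodule.smithNormalFormCoeffs_ne_zero b hrank i
  have e : M ≃ₗ[K[X]] ∀ i, K[X] ⧸ Ideal.span {a i} :=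
    (π.quotKerEquivOfSurjective hπ).symm.trans (π.ker.quotientEquivPiSpan b hrank)
  refine ⟨fun i => normalize (a i), fun i => monic_normalize (ha i), ⟨e.trans <|
    LinearEquiv.piCongrRight fun i => Submodule.quotEquivOfEq _ _ ?_⟩⟩
  exact Ideal.span_singleton_eq_span_singleton.2 (associated_normalize _)

/-- Monic polynomials `d i`, indexed by `n`, such that the `K[X]`-module defined by `A` is
isomorphic to `∏ i, K[X] / (d i)`. They are merely chosen: `d i` may be `1`, and no divisibility
among them is recorded. -/
noncomputable def invariantFactors (A : Matrix n n K) : n → K[X] :=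
  (exists_aeval_equiv_pi_quotient A).choose

theorem invariantFactors_monic (A : Matrix n n K) (i : n) : (invariantFactors A i).Monic :=
  (exists_aeval_equiv_pi_quotient A).choose_spec.1 i

theorem nonempty_aeval_equiv_pi_invariantFactors (A : Matrix n n K) :
    Nonempty (AEval' A.toLin' ≃ₗ[K[X]] ∀ i, K[X] ⧸ Ideal.span {invariantFactors A i}) :=
  (exists_aeval_equiv_pi_quotient A).choose_spec.2

theorem invariantFactors_dvd {A : Matrix n n K} {f : K[X]} (hf : aeval A f = 0) (i : n) :
    invariantFactors A i ∣ f := by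
  obtain ⟨e⟩ := nonempty_aeval_equiv_pi_invariantFactors A
  have hA : aeval A.toLin' f = 0 := by
    have h := aeval_algHom_apply (Matrix.toLinAlgEquiv' (R := K) (n := n)).toAlgHom A f
    rwa [hf, map_zero] at h
  have hM (x : AEval' A.toLin') : f • x = 0 := by
    rw [← (AEval'.of A.toLin').symm.map_eq_zero_iff, AEval.of_symm_smul, hA, zero_smul]
  have h : f • (fun j => (Ideal.span {invariantFactors A j}).mkQ 1) = 0 := by
    rw [← e.symm.map_eq_zero_iff, map_smul, hM]
  have hi : (Ideal.span {invariantFactors A i}).mkQ (f • 1) = 0 := by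
    rw [map_smul]
    exact congrFun h i
  simpa [Ideal.mem_span_singleton] using (Submodule.Quotient.mk_eq_zero _).1 hi

theorem exists_linearEquiv_semiconj {V : Type*} [AddCommGroup V] [Module K V] {f g : End K V}
    (e : AEval' f ≃ₗ[K[X]] AEval' g) : ∃ u : V ≃ₗ[K] V, ∀ v, g (u v) = u (f v) := by
  refine ⟨(AEval'.of f).trans ((e.restrictScalars K).trans (AEval'.of g).symm), fun v => ?_⟩
  simp only [LinearEquiv.trans_apply, LinearEquiv.restrictScalars_apply]
  rw [← AEval'.X_smul_of, map_smul, AEval'.of_symm_X_smul]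

theorem isConj_of_invariantFactors_eq {A B : Matrix n n K}
    (h : invariantFactors A = invariantFactors B) : IsConj A B := by
  obtain ⟨eA⟩ := nonempty_aeval_equiv_pi_invariantFactors A
  obtain ⟨eB⟩ := nonempty_aeval_equiv_pi_invariantFactors B
  rw [h] at eA
  obtain ⟨g, hg⟩ := exists_linearEquiv_semiconj (eA.trans eB.symm)
  refine ⟨⟨g.toLinearMap.toMatrix', g.symm.toLinearMap.toMatrix', ?_, ?_⟩, ?_⟩
  · rw [← LinearMap.toMatrix'_comp, LinearEquiv.comp_symm, LinearMap.toMatrix'_id]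
  · rw [← LinearMap.toMatrix'_comp, LinearEquiv.symm_comp, LinearMap.toMatrix'_id]
  · exact (mem_intertwiners_iff_toLin'.2 fun v => by
      rw [Matrix.toLin'_toMatrix', LinearEquiv.coe_coe, hg]).symm

theorem finrank_intertwiners_eq_sum [DecidableEq K] {m : Type*} [Fintype m] [DecidableEq m]
    (A : Matrix m m K) (B : Matrix n n K) : finrank K (intertwiners A B) =
      ∑ i, ∑ j, (EuclideanDomain.gcd (invariantFactors A i) (invariantFactors B j)).natDegree := by
  obtain ⟨eA⟩ := nonempty_aeval_equiv_pi_invariantFactors A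
  obtain ⟨eB⟩ := nonempty_aeval_equiv_pi_invariantFactors B
  rw [finrank_intertwiners_eq_finrank_hom, ← finrank_hom_pi_quotient _ (invariantFactors_monic B),
    ((eA.arrowCongr eB).restrictScalars K).finrank_eq]

end InvariantFactors

theorem two_mul_finrank_intertwiners_le {m n : Type*} [Fintype m] [Fintype n] (A : Matrix m m K)
    (B : Matrix n n K) : 2 * finrank K (intertwiners A B) ≤
      finrank K (intertwiners A A) + finrank K (intertwiners B B) := by
  classical
  simpa only [finrank_intertwiners_eq_sum] using
    two_mul_sum_natDegree_gcd_le (fun i => (invariantFactors_monic A i).ne_zero)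
      (fun i => (invariantFactors_monic B i).ne_zero)

section Dimension

open Matrix

theorem finrank_eq_finrank_map_add {V V' : Type*} [AddCommGroup V] [Module K V]
    [FiniteDimensional K V] [AddCommGroup V'] [Module K V'] (N : Submodule K V) (f : V →ₗ[K] V') :
    finrank K N = finrank K (N.map f) + finrank K (N ⊓ f.ker : Submodule K V) := by
  rw [← (f.domRestrict N).finrank_range_add_finrank_ker, LinearMap.range_domRestrict,
    LinearMap.ker_domRestrict, ← Submodule.map_comap_subtype,
    Submodule.finrank_map_subtype_eq]

theorem finrank_le_of_forall_apply {V V' : Type*} [AddCommGroup V] [Module K V]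
    [FiniteDimensional K V] [AddCommGroup V'] [Module K V'] [FiniteDimensional K V']
    {N : Submodule K (V →ₗ[K] V')} {W : Submodule K V} {Z : Submodule K V'}
    (hW : ∀ f ∈ N, W ≤ f.ker) (hZ : ∀ f ∈ N, f.range ≤ Z) :
    finrank K N ≤ finrank K (V ⧸ W) * finrank K Z := by
  let φ : ((V ⧸ W) →ₗ[K] Z) →ₗ[K] V →ₗ[K] V' :=
    (LinearMap.lcomp K V' W.mkQ) ∘ₗ LinearMap.llcomp K (V ⧸ W) Z V' Z.subtype
  have hN : N ≤ φ.range := fun f hf =>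
    ⟨W.liftQ (f.codRestrict Z fun v => hZ f hf ⟨v, rfl⟩) fun w hw => by
      simpa using hW f hf hw, by ext; rfl⟩
  rw [← finrank_linearMap (R := K)]
  exact (Submodule.finrank_mono hN).trans (LinearMap.finrank_range_le φ)

variable {m n k l : Type*} [Fintype m] [Fintype n] [Fintype k] [Fintype l]

theorem finrank_le_of_mul_eq_zero [DecidableEq k] [DecidableEq l]
    {N : Submodule K (Matrix n m K)} {P : Matrix m k K} {L : Matrix k m K} {Q : Matrix l n K}
    {R : Matrix n l K} (hP : L * P = 1) (hQ : Q * R = 1) (hN : ∀ X ∈ N, X * P = 0 ∧ Q * X = 0) :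
    finrank K N ≤ (Fintype.card m - Fintype.card k) * (Fintype.card n - Fintype.card l) := by
  classical
  have hPinj : Function.Injective P.toLin' :=
    Function.LeftInverse.injective (g := L.toLin') fun v => by simp [Matrix.mulVec_mulVec, hP]
  have hQsurj : Function.Surjective Q.toLin' :=
    fun v => ⟨R.toLin' v, by simp [Matrix.mulVec_mulVec, hQ]⟩
  have hW : finrank K ((m → K) ⧸ P.toLin'.range) = Fintype.card m - Fintype.card k := by
    rw [Submodule.finrank_quotient, LinearMap.finrank_range_of_inj hPinj,
      finrank_fintype_fun_eq_card, finrank_fintype_fun_eq_card]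
  have hZ : finrank K Q.toLin'.ker = Fintype.card n - Fintype.card l := by
    have h := Q.toLin'.finrank_range_add_finrank_ker
    rw [LinearMap.range_eq_top.2 hQsurj, finrank_top] at h
    simp only [finrank_fintype_fun_eq_card] at h
    omega
  rw [← LinearEquiv.finrank_map_eq Matrix.toLin' N, ← hW, ← hZ]
  refine finrank_le_of_forall_apply ?_ ?_
  · rintro _ ⟨X, hX, rfl⟩ _ ⟨v, rfl⟩
    simp [(hN X hX).1]
  · rintro _ ⟨X, hX, rfl⟩ _ ⟨v, rfl⟩
    simp [(hN X hX).2]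

theorem finrank_intertwiners_mul_le [DecidableEq k] [DecidableEq l] {P : Matrix m k K}
    {Q : Matrix k m K} {P' : Matrix n l K} {Q' : Matrix l n K} {L : Matrix k m K}
    {R : Matrix m k K} {L' : Matrix l n K} {R' : Matrix n l K} (hL : L * P = 1)
    (hR : Q * R = 1) (hL' : L' * P' = 1) (hR' : Q' * R' = 1) :
    finrank K (intertwiners (P * Q) (P' * Q')) ≤
      finrank K (intertwiners (Q * P) (Q' * P')) +
        (Fintype.card m - Fintype.card k) * (Fintype.card n - Fintype.card l) := by
  let f : Matrix n m K →ₗ[K] Matrix l k K :=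
    { toFun X := L' * X * P
      map_add' X Y := by rw [Matrix.mul_add, Matrix.add_mul]
      map_smul' c X := by rw [Matrix.mul_smul, Matrix.smul_mul, RingHom.id_apply] }
  have hXP {X : Matrix n m K} (hX : X ∈ intertwiners (P * Q) (P' * Q')) :
      P' * (L' * X * P) = X * P := by
    have : X * P = P' * Q' * X * R := by
      rw [mem_intertwiners.1 hX, Matrix.mul_assoc, Matrix.mul_assoc, hR, Matrix.mul_one]
    rw [Matrix.mul_assoc L', this]
    simp only [← Matrix.mul_assoc]
    rw [Matrix.mul_assoc P' L', hL', Matrix.mul_one]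
  rw [finrank_eq_finrank_map_add _ f]
  refine add_le_add (Submodule.finrank_mono ?_) (finrank_le_of_mul_eq_zero hL hR' ?_)
  · rintro _ ⟨X, hX, rfl⟩
    change Q' * P' * (L' * X * P) = L' * X * P * (Q * P)
    rw [Matrix.mul_assoc Q', hXP hX]
    calc Q' * (X * P) = L' * P' * Q' * (X * P) := by rw [hL', Matrix.one_mul]
      _ = L' * (P' * Q' * X) * P := by simp only [Matrix.mul_assoc]
      _ = L' * X * P * (Q * P) := by rw [mem_intertwiners.1 hX]; simp only [Matrix.mul_assoc]
  · rintro X ⟨hX, hfX⟩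
    have h0 : X * P = 0 := by
      rw [← hXP hX, show L' * X * P = 0 from hfX, Matrix.mul_zero]
    refine ⟨h0, ?_⟩
    calc Q' * X = L' * P' * Q' * X := by rw [hL', Matrix.one_mul]
      _ = L' * (P' * Q' * X) := by simp only [Matrix.mul_assoc]
      _ = L' * (X * P * Q) := by rw [mem_intertwiners.1 hX, ← Matrix.mul_assoc X]
      _ = 0 := by rw [h0, Matrix.zero_mul, Matrix.mul_zero]

theorem exists_linearIndependent_mulVec [DecidableEq n] {A : Matrix n n K}
    (hA : ∀ a, A ≠ Matrix.scalar n a) : ∃ v, LinearIndependent K ![v, A *ᵥ v] := by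
  by_contra! h
  obtain ⟨a, ha⟩ := LinearMap.exists_eq_smul_id_of_forall_notLinearIndependent (f := A.toLin') h
  refine hA a (Matrix.toLin'.injective ?_)
  rw [ha, Matrix.scalar_apply, ← Matrix.smul_one_eq_diagonal, map_smul, Matrix.toLin'_one]
  rfl

theorem exists_left_inverse_of_linearIndependent {k : Type*} [Finite k] [DecidableEq k]
    {P : Matrix m k K} (hP : LinearIndependent K P.col) : ∃ L : Matrix k m K, L * P = 1 := by
  classical
  have := Fintype.ofFinite k
  obtain ⟨g, hg⟩ := P.toLin'.exists_leftInverse_of_injective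
    (LinearMap.ker_eq_bot.2 (Matrix.mulVec_injective_iff.2 hP))
  exact ⟨g.toMatrix', by
    rw [← LinearMap.toMatrix'_toLin' P, ← LinearMap.toMatrix'_comp, hg, LinearMap.toMatrix'_id]⟩

theorem exists_right_inverse_of_linearIndependent {k : Type*} [Finite k] [DecidableEq k]
    {Q : Matrix k n K} (hQ : LinearIndependent K Q.row) : ∃ R : Matrix n k K, Q * R = 1 := by
  obtain ⟨L, hL⟩ := exists_left_inverse_of_linearIndependent (P := Qᵀ) hQ
  exact ⟨Lᵀ, Matrix.transpose_injective (by
    rw [Matrix.transpose_mul, Matrix.transpose_transpose, hL, Matrix.transpose_one])⟩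

/-- The linear map `X ↦ (X v, f X)`, used to bound the dimension of a centralizer. -/
def mulVecProdVecMul (v f : n → K) : Matrix n n K →ₗ[K] (n → K) × (n → K) where
  toFun X := (X *ᵥ v, f ᵥ* X)
  map_add' X Y := by simp [Matrix.add_mulVec, Matrix.vecMul_add]
  map_smul' c X := by simp [Matrix.smul_mulVec, Matrix.vecMul_smul]

variable {A : Matrix n n K} {v f : n → K}

theorem finrank_intertwiners_self_inf_ker_le (hv : LinearIndependent K ![v, A *ᵥ v])
    (hf : LinearIndependent K ![f, f ᵥ* A]) :
    finrank K (intertwiners A A ⊓ (mulVecProdVecMul v f).ker : Submodule K (Matrix n n K)) ≤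
      (Fintype.card n - 2) * (Fintype.card n - 2) := by
  obtain ⟨L, hL⟩ := exists_left_inverse_of_linearIndependent (P := (Matrix.of ![v, A *ᵥ v])ᵀ) hv
  obtain ⟨R, hR⟩ := exists_right_inverse_of_linearIndependent (Q := Matrix.of ![f, f ᵥ* A]) hf
  rw [← Fintype.card_fin 2]
  refine finrank_le_of_mul_eq_zero hL hR ?_
  rintro X ⟨hX, hXker⟩
  obtain ⟨hXv, hfX⟩ : X *ᵥ v = 0 ∧ f ᵥ* X = 0 := Prod.ext_iff.1 hXker
  have hXAv : X *ᵥ A *ᵥ v = 0 := by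
    rw [Matrix.mulVec_mulVec, ← mem_intertwiners.1 hX, ← Matrix.mulVec_mulVec, hXv,
      Matrix.mulVec_zero]
  have hfAX : (f ᵥ* A) ᵥ* X = 0 := by
    rw [Matrix.vecMul_vecMul, mem_intertwiners.1 hX, ← Matrix.vecMul_vecMul, hfX,
      Matrix.zero_vecMul]
  constructor
  · ext i j
    fin_cases j
    · exact congrFun hXv i
    · exact congrFun hXAv i
  · ext i j
    fin_cases i
    · exact congrFun hfX j
    · exact congrFun hfAX j

-- The image satisfies two independent linear conditions: `f (X v) = (f X) v` and
-- `(f A) (X v) = (f X) (A v)`.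
theorem finrank_map_intertwiners_self_le (v : n → K)
    (hf : LinearIndependent K ![f, f ᵥ* A]) :
    finrank K ((intertwiners A A).map (mulVecProdVecMul v f)) ≤ 2 * (Fintype.card n - 1) := by
  let P : Matrix n (Fin 2) K := (Matrix.of ![v, A *ᵥ v])ᵀ
  let Q : Matrix (Fin 2) n K := Matrix.of ![f, f ᵥ* A]
  obtain ⟨R, hR⟩ := exists_right_inverse_of_linearIndependent (Q := Q) hf
  let ψ : (n → K) × (n → K) →ₗ[K] (Fin 2 → K) := Q.mulVecLin.coprod (-P.vecMulLinear)
  have hψ : Function.Surjective ψ := fun w => ⟨(R *ᵥ w, 0), by simp [ψ, hR]⟩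
  have hmap : (intertwiners A A).map (mulVecProdVecMul v f) ≤ ψ.ker := by
    rintro _ ⟨X, hX, rfl⟩
    have h₀ : f ⬝ᵥ X *ᵥ v = v ⬝ᵥ f ᵥ* X := by rw [Matrix.dotProduct_mulVec, dotProduct_comm]
    have h₁ : f ᵥ* A ⬝ᵥ X *ᵥ v = A *ᵥ v ⬝ᵥ f ᵥ* X := by
      rw [dotProduct_comm (A *ᵥ v), Matrix.dotProduct_mulVec, Matrix.dotProduct_mulVec,
        Matrix.vecMul_vecMul, Matrix.vecMul_vecMul, mem_intertwiners.1 hX]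
    rw [LinearMap.mem_ker]
    ext i
    fin_cases i
    · simp [mulVecProdVecMul, ψ, P, Q, h₀, -Matrix.mulVec_mulVec, -Matrix.vecMul_vecMul]
    · simp [mulVecProdVecMul, ψ, P, Q, h₁, -Matrix.mulVec_mulVec, -Matrix.vecMul_vecMul]
  have hdim := ψ.finrank_range_add_finrank_ker
  rw [LinearMap.range_eq_top.2 hψ, finrank_top, finrank_prod] at hdim
  simp only [finrank_fintype_fun_eq_card, Fintype.card_fin] at hdim
  have := Submodule.finrank_mono hmap
  omega

theorem finrank_intertwiners_self_le [DecidableEq n] (hA : ∀ a, A ≠ Matrix.scalar n a) :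
    finrank K (intertwiners A A) ≤ Fintype.card n ^ 2 + 2 - 2 * Fintype.card n := by
  obtain ⟨v, hv⟩ := exists_linearIndependent_mulVec hA
  obtain ⟨f, hf⟩ := exists_linearIndependent_mulVec (A := Aᵀ) fun a ha => hA a (by
    rw [← Matrix.transpose_transpose A, ha]; simp)
  rw [Matrix.mulVec_transpose] at hf
  rw [finrank_eq_finrank_map_add _ (mulVecProdVecMul v f)]
  refine (add_le_add (finrank_map_intertwiners_self_le v hf)
    (finrank_intertwiners_self_inf_ker_le hv hf)).trans ?_
  match Fintype.card n with
  | 0 | 1 => norm_num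
  | m + 2 =>
    have hsq : (m + 2) ^ 2 = m * m + 4 * m + 4 := by ring
    rw [Nat.add_sub_cancel]
    omega

end Dimension

section Anticommuting

open Matrix

variable {n : Type*} [Fintype n]

theorem intertwiners_neg_neg (A B : Matrix n n K) : intertwiners (-A) (-B) = intertwiners A B := by
  ext X
  simp [mem_intertwiners]

theorem finrank_intertwiners_neg_le (A : Matrix n n K) :
    finrank K (intertwiners A (-A)) ≤ finrank K (intertwiners A A) := by
  have := two_mul_finrank_intertwiners_le A (-A)
  rw [intertwiners_neg_neg] at this
  omega

theorem intertwiners_neg_scalar [DecidableEq n] (h2 : (2 : K) ≠ 0) {a : K} (ha : a ≠ 0) :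
    intertwiners (Matrix.scalar n a) (-Matrix.scalar n a) = ⊥ := by
  refine eq_bot_iff.2 fun X hX => ?_
  have hX : -(a • X) = a • X := by
    simpa [mem_intertwiners, ← Matrix.smul_one_eq_diagonal] using hX
  have : (2 * a) • X = 0 := by rw [mul_smul, two_smul, ← eq_neg_iff_add_eq_zero, hX]
  simpa [h2, ha] using this

theorem finrank_intertwiners_neg_le_of_ne_zero (h2 : (2 : K) ≠ 0) {A : Matrix n n K} (hA : A ≠ 0) :
    finrank K (intertwiners A (-A)) ≤ Fintype.card n ^ 2 + 2 - 2 * Fintype.card n := by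
  classical
  by_cases h : ∃ a, A = Matrix.scalar n a
  · obtain ⟨a, rfl⟩ := h
    have ha : a ≠ 0 := fun ha => hA (by rw [ha, map_zero])
    rw [intertwiners_neg_scalar h2 ha, finrank_bot]
    exact Nat.zero_le _
  · exact (finrank_intertwiners_neg_le A).trans (finrank_intertwiners_self_le (not_exists.1 h))

theorem intertwiners_inf_intertwiners_neg [DecidableEq n] (h2 : (2 : K) ≠ 0)
    (u : (Matrix n n K)ˣ) :
    intertwiners u.1 u.1 ⊓ intertwiners u.1 (-u.1) = ⊥ := by
  refine eq_bot_iff.2 fun X ⟨h₁, h₂⟩ => ?_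
  have h : (2 : K) • (u.1 * X) = 0 := by
    rw [two_smul]
    nth_rewrite 1 [mem_intertwiners.1 h₁]
    rw [← mem_intertwiners.1 h₂, neg_mul, neg_add_cancel]
  simpa [h2] using h

-- These are the eigenspaces of conjugation by `u`, an involution on the commutant of `u ^ 2`.
theorem intertwiners_sup_intertwiners_neg [DecidableEq n] (h2 : (2 : K) ≠ 0)
    (u : (Matrix n n K)ˣ) :
    intertwiners u.1 u.1 ⊔ intertwiners u.1 (-u.1) = intertwiners (u.1 ^ 2) (u.1 ^ 2) := by
  refine le_antisymm (sup_le (fun X hX => ?_) fun X hX => ?_) fun X hX => ?_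
  · exact Commute.pow_left (mem_intertwiners.1 hX) 2
  · have hX : u.1 * X = -(X * u.1) := by rw [← mem_intertwiners.1 hX, neg_mul, neg_neg]
    rw [mem_intertwiners, pow_two, mul_assoc, hX, mul_neg, ← mul_assoc, hX, neg_mul, neg_neg,
      mul_assoc]
  · let Y : Matrix n n K := u⁻¹.1 * X * u.1
    have hY₁ : u.1 * Y = X * u.1 := by simp only [Y, mul_assoc, Units.mul_inv_cancel_left]
    have hY₂ : Y * u.1 = u.1 * X := by
      rw [mul_assoc, mul_assoc, ← pow_two, ← mem_intertwiners.1 hX, pow_two, mul_assoc,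
        Units.inv_mul_cancel_left]
    have hX₂ : X = (2⁻¹ : K) • (X + Y) + (2⁻¹ : K) • (X - Y) := by
      rw [← smul_add, add_add_sub_cancel, ← two_smul K X, inv_smul_smul₀ h2]
    rw [hX₂]
    refine Submodule.add_mem_sup (Submodule.smul_mem _ _ ?_) (Submodule.smul_mem _ _ ?_)
    · rw [mem_intertwiners, mul_add, add_mul, hY₁, hY₂, add_comm]
    · rw [mem_intertwiners, neg_mul, mul_sub, sub_mul, hY₁, hY₂, neg_sub]

theorem finrank_intertwiners_add_finrank_intertwiners_neg [DecidableEq n] (h2 : (2 : K) ≠ 0)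
    (u : (Matrix n n K)ˣ) :
    finrank K (intertwiners u.1 u.1) + finrank K (intertwiners u.1 (-u.1)) =
      finrank K (intertwiners (u.1 ^ 2) (u.1 ^ 2)) := by
  rw [← Submodule.finrank_sup_add_finrank_inf_eq, intertwiners_inf_intertwiners_neg h2,
    finrank_bot, intertwiners_sup_intertwiners_neg h2, add_zero]

theorem finrank_intertwiners_scalar [DecidableEq n] (a : K) :
    finrank K (intertwiners (Matrix.scalar n a) (Matrix.scalar n a)) =
      Fintype.card n * Fintype.card n := by
  have : intertwiners (Matrix.scalar n a) (Matrix.scalar n a) = ⊤ :=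
    eq_top_iff.2 fun X _ => Matrix.scalar_commute a (mul_comm a) X
  rw [this, finrank_top, finrank_matrix, finrank_self, mul_one]

end Anticommuting

section OrbitCounting

theorem sum_card_stabilizer_le {G Ω τ : Type*} [Group G] [Finite G] [MulAction G Ω]
    [DecidableEq τ] (S : Finset Ω) {θ : Ω → τ}
    (hθ : ∀ x y, θ x = θ y → y ∈ MulAction.orbit G x) :
    ∑ x ∈ S, Nat.card (MulAction.stabilizer G x) ≤ (S.image θ).card * Nat.card G := by
  rw [← Finset.sum_fiberwise_of_maps_to (fun x hx => Finset.mem_image_of_mem θ hx),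
    ← smul_eq_mul]
  refine Finset.sum_le_card_nsmul _ _ _ fun t ht => ?_
  obtain ⟨x, -, rfl⟩ := Finset.mem_image.1 ht
  have hcard (y : Ω) (hy : y ∈ S.filter (θ · = θ x)) :
      Nat.card (MulAction.stabilizer G y) = Nat.card (MulAction.stabilizer G x) :=
    Nat.card_congr (MulAction.stabilizerEquivStabilizerOfOrbitRel
      (hθ x y (Finset.mem_filter.1 hy).2.symm)).toEquiv
  have hfib : (S.filter (θ · = θ x)).card ≤ Nat.card (MulAction.orbit G x) := by
    rw [← Nat.card_eq_finsetCard]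
    exact Nat.card_mono (Set.finite_range _) fun y hy => hθ x y (Finset.mem_filter.1 hy).2.symm
  rw [Finset.sum_congr rfl hcard, Finset.sum_const, smul_eq_mul,
    ← Nat.card_congr (MulAction.orbitProdStabilizerEquivGroup G x), Nat.card_prod]
  exact Nat.mul_le_mul_right _ hfib

end OrbitCounting

section Units

/-- A finite algebra of dimension `d` over a field has at most `unitsBound d` elements per unit. -/
def unitsBound (d : ℕ) : ℕ := (d + 1) ^ (d + 1)

theorem encard_spectrum_le_finrank {R : Type*} [Ring R] [Algebra K R] [FiniteDimensional K R]
    (x : R) : (spectrum K x).encard ≤ finrank K R := by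
  classical
  rcases subsingleton_or_nontrivial R with hR | hR
  · simp [spectrum.of_subsingleton]
  have hroots : spectrum K x ⊆ (minpoly K x).roots.toFinset := fun a ha => by
    have h := spectrum.subset_polynomial_aeval x (minpoly K x) ⟨a, ha, rfl⟩
    rw [minpoly.aeval, spectrum.zero_eq] at h
    simpa [minpoly.ne_zero_of_finite K x] using h
  refine (Set.encard_le_encard hroots).trans ?_
  rw [Set.encard_coe_eq_coe_finsetCard, Nat.cast_le]
  exact (Multiset.toFinset_card_le _).trans ((card_roots' _).trans (minpoly.natDegree_le x))

-- If the field has more than `d` elements, then one of `d + 1` fixed scalar translates of a given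
-- element is invertible; otherwise the whole algebra is small.
theorem natCard_le_unitsBound_mul [Finite K] (R : Type*) [Ring R] [Algebra K R]
    [FiniteDimensional K R] :
    Nat.card R ≤ unitsBound (finrank K R) * Nat.card Rˣ := by
  set d := finrank K R
  have : Finite R := Module.finite_of_finite K
  rcases le_or_gt (Nat.card K) d with hK | hK
  · calc Nat.card R = Nat.card K ^ d := Module.natCard_eq_pow_finrank
      _ ≤ (d + 1) ^ (d + 1) := pow_le_pow (by omega) (by omega) (by omega)
      _ ≤ unitsBound d * Nat.card Rˣ := Nat.le_mul_of_pos_right _ Nat.card_pos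
  · obtain ⟨T, -, hT⟩ := Set.exists_subset_encard_eq (s := (Set.univ : Set K))
      (k := (d + 1 : ℕ)) (by rw [Set.encard_univ, ENat.card_eq_coe_natCard]; exact_mod_cast hK)
    have hTcard : Nat.card T = d + 1 := by
      rw [Nat.card_coe_set_eq, Set.ncard, hT]; rfl
    have hsurj : Function.Surjective
        fun p : T × Rˣ => algebraMap K R p.1 - (p.2 : R) := fun x => by
      obtain ⟨t, htT, ht⟩ : ∃ t ∈ T, t ∉ spectrum K x := Set.not_subset.1 fun h =>
        absurd ((hT.symm.le.trans (Set.encard_le_encard h)).trans (encard_spectrum_le_finrank x))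
          (by exact_mod_cast Nat.not_succ_le_self d)
      obtain ⟨u, hu⟩ := spectrum.notMem_iff.1 ht
      exact ⟨(⟨t, htT⟩, u), by simp [hu]⟩
    calc Nat.card R ≤ Nat.card (T × Rˣ) := Nat.card_le_card_of_surjective _ hsurj
      _ = (d + 1) * Nat.card Rˣ := by rw [Nat.card_prod, hTcard]
      _ ≤ unitsBound d * Nat.card Rˣ :=
        Nat.mul_le_mul_right _ (Nat.le_self_pow (by omega) _)

variable {n : Type*} [Fintype n]

theorem finrank_matrix_self : finrank K (Matrix n n K) = Fintype.card n ^ 2 := by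
  rw [finrank_matrix, finrank_self, mul_one, pow_two]

variable [DecidableEq n]

theorem pow_finrank_intertwiners_le [Finite K] (A : Matrix n n K) :
    Nat.card K ^ finrank K (intertwiners A A) ≤ unitsBound (Fintype.card n ^ 2) *
      Nat.card (MulAction.stabilizer (ConjAct (Matrix n n K)ˣ) A) := by
  let S := Subalgebra.centralizer K {A}
  have hS : Subalgebra.toSubmodule S = intertwiners A A := by
    ext X
    simp [S, Subalgebra.mem_centralizer_iff, mem_intertwiners]
  have hdim : finrank K S ≤ Fintype.card n ^ 2 := by
    rw [← finrank_matrix_self (K := K)]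
    exact Submodule.finrank_le (Subalgebra.toSubmodule S)
  rw [← hS]
  calc Nat.card K ^ finrank K S = Nat.card S := Module.natCard_eq_pow_finrank.symm
    _ ≤ unitsBound (finrank K S) * Nat.card Sˣ := natCard_le_unitsBound_mul S
    _ ≤ _ := Nat.mul_le_mul ?_ ?_
  · exact (Nat.pow_le_pow_left (by omega) _).trans (Nat.pow_le_pow_right (by omega) (by omega))
  · have : Finite (ConjAct (Matrix n n K)ˣ) := inferInstanceAs (Finite (Matrix n n K)ˣ)
    refine Nat.card_le_card_of_injective (fun u =>
      ⟨ConjAct.toConjAct (Units.map S.val.toMonoidHom u), ?_⟩) fun u v h => ?_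
    · rw [MulAction.mem_stabilizer_iff, ConjAct.units_smul_def, Units.mul_inv_eq_iff_eq_mul]
      exact (Subalgebra.mem_centralizer_iff K).1 u.1.2 A rfl |>.symm
    · have h := congrArg Subtype.val h
      exact Units.map_injective Subtype.val_injective (ConjAct.toConjAct.injective h)

end Units

section ClassCounting

theorem exists_finset_monic_dvd {f : K[X]} (hf : f ≠ 0) :
    ∃ D : Finset K[X], D.card ≤ 2 ^ f.natDegree ∧ ∀ d, d.Monic → d ∣ f → d ∈ D := by
  classical
  have hcard : (normalizedFactors f).card ≤ f.natDegree := by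
    have h := natDegree_eq_of_degree_eq (degree_eq_degree_of_associated (prod_normalizedFactors hf))
    rw [← h, natDegree_multiset_prod _ (zero_notMem_normalizedFactors f),
      ← Multiset.card_map natDegree, ← mul_one (Multiset.card _), ← smul_eq_mul]
    refine Multiset.card_nsmul_le_sum fun k hk => ?_
    obtain ⟨p, hp, rfl⟩ := Multiset.mem_map.1 hk
    exact (irreducible_of_normalized_factor p hp).natDegree_pos
  refine ⟨((normalizedFactors f).powerset.map Multiset.prod).toFinset,
    (Multiset.toFinset_card_le _).trans ?_, fun d hd hdf => ?_⟩
  · rw [Multiset.card_map, Multiset.card_powerset]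
    exact Nat.pow_le_pow_right two_pos hcard
  · refine Multiset.mem_toFinset.2 (Multiset.mem_map.2 ⟨normalizedFactors d,
      Multiset.mem_powerset.2
        ((dvd_iff_normalizedFactors_le_normalizedFactors hd.ne_zero hf).1 hdf), ?_⟩)
    rw [prod_normalizedFactors_eq hd.ne_zero, hd.normalize_eq_self]

variable {n : Type*} [Fintype n] [DecidableEq n]

theorem card_image_invariantFactors_le [DecidableEq K] {S : Finset (Matrix n n K)}
    {T : Finset K[X]} {m : ℕ} (hT : ∀ f ∈ T, f ≠ 0 ∧ f.natDegree ≤ m)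
    (hS : ∀ A ∈ S, ∃ f ∈ T, aeval A f = 0) :
    (S.image invariantFactors).card ≤ T.card * (2 ^ m) ^ Fintype.card n := by
  choose! D hDcard hD using fun f (hf : f ∈ T) => exists_finset_monic_dvd (hT f hf).1
  calc (S.image invariantFactors).card
      ≤ (T.biUnion fun f => Fintype.piFinset fun _ : n => D f).card := Finset.card_le_card ?_
    _ ≤ _ := Finset.card_biUnion_le_card_mul _ _ _ fun f hf => ?_
  · intro θ hθ
    obtain ⟨A, hA, rfl⟩ := Finset.mem_image.1 hθ
    obtain ⟨f, hf, hfA⟩ := hS A hA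
    exact Finset.mem_biUnion.2 ⟨f, hf, Fintype.mem_piFinset.2 fun i =>
      hD f hf _ (invariantFactors_monic A i) (invariantFactors_dvd hfA i)⟩
  · rw [Fintype.card_piFinset, Finset.prod_const, Finset.card_univ]
    exact Nat.pow_le_pow_left ((hDcard f hf).trans (Nat.pow_le_pow_right two_pos (hT f hf).2)) _

theorem sum_pow_finrank_intertwiners_le [Finite K] {S : Finset (Matrix n n K)} {T : Finset K[X]}
    {m : ℕ} (hT : ∀ f ∈ T, f ≠ 0 ∧ f.natDegree ≤ m) (hS : ∀ A ∈ S, ∃ f ∈ T, aeval A f = 0) :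
    ∑ A ∈ S, Nat.card K ^ finrank K (intertwiners A A) ≤ unitsBound (Fintype.card n ^ 2) *
      (T.card * (2 ^ m) ^ Fintype.card n * Nat.card K ^ Fintype.card n ^ 2) := by
  classical
  have : Finite (ConjAct (Matrix n n K)ˣ) := inferInstanceAs (Finite (Matrix n n K)ˣ)
  have hunits : Nat.card (ConjAct (Matrix n n K)ˣ) ≤ Nat.card K ^ Fintype.card n ^ 2 := by
    refine (Nat.card_le_card_of_injective (fun g => ((ConjAct.ofConjAct g : (Matrix n n K)ˣ) :
      Matrix n n K)) (Units.val_injective.comp ConjAct.ofConjAct.injective)).trans ?_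
    rw [Module.natCard_eq_pow_finrank (K := K), finrank_matrix_self]
  have horbit (A B : Matrix n n K) (h : invariantFactors A = invariantFactors B) :
      B ∈ MulAction.orbit (ConjAct (Matrix n n K)ˣ) A := by
    obtain ⟨u, hu⟩ := isConj_of_invariantFactors_eq h
    exact ⟨ConjAct.toConjAct u, (Units.mul_inv_eq_iff_eq_mul u).2 hu⟩
  calc ∑ A ∈ S, Nat.card K ^ finrank K (intertwiners A A)
      ≤ ∑ A ∈ S, unitsBound (Fintype.card n ^ 2) *
        Nat.card (MulAction.stabilizer (ConjAct (Matrix n n K)ˣ) A) :=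
        Finset.sum_le_sum fun A _ => pow_finrank_intertwiners_le A
    _ = unitsBound (Fintype.card n ^ 2) *
        ∑ A ∈ S, Nat.card (MulAction.stabilizer (ConjAct (Matrix n n K)ˣ) A) :=
        (Finset.mul_sum _ _ _).symm
    _ ≤ _ := Nat.mul_le_mul_left _ ((sum_card_stabilizer_le S horbit).trans
        (Nat.mul_le_mul (card_image_invariantFactors_le hT hS) hunits))

end ClassCounting

section Counting

variable {n : Type*} [Fintype n] [DecidableEq n]

theorem charpoly_neg_eq (A : Matrix n n K) :
    (-A).charpoly = (-1) ^ Fintype.card n * A.charpoly.comp (-X) := by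
  have hmap : (compRingHom (-X)).mapMatrix A.charmatrix = -(-A).charmatrix := by
    ext i j : 1
    by_cases h : i = j
    · subst h
      simp [sub_eq_neg_add, add_comm]
    · simp [h]
  rw [Matrix.charpoly, Matrix.charpoly, ← coe_compRingHom_apply, RingHom.map_det, hmap,
    Matrix.det_neg, ← mul_assoc, ← mul_pow, neg_mul_neg, one_mul, one_pow, one_mul]

theorem charpoly_coeff_eq_zero_of_isConj_neg (h2 : (2 : K) ≠ 0) {A : Matrix n n K}
    (hA : IsConj A (-A)) {i : ℕ} (hi : i % 2 ≠ Fintype.card n % 2) : A.charpoly.coeff i = 0 := by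
  obtain ⟨u, hu⟩ := hA
  have hpoly : A.charpoly = (-1) ^ Fintype.card n * A.charpoly.comp (-X) := by
    rw [← charpoly_neg_eq, ← (Units.mul_inv_eq_iff_eq_mul u).2 hu, Matrix.coe_units_inv,
      Matrix.charpoly_units_conj]
  have hsign : (-1 : K) ^ Fintype.card n * (-1) ^ i = -1 := by
    rw [← pow_add]
    exact Odd.neg_one_pow (Nat.odd_iff.2 (by omega))
  have hcoeff : A.charpoly.coeff i = -A.charpoly.coeff i := by
    conv_lhs => rw [hpoly]
    rw [← neg_one_mul (X : K[X]), ← C_1, ← C_neg, ← C_pow, coeff_C_mul,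
      comp_C_mul_X_coeff, mul_left_comm, hsign, mul_neg_one]
  have : 2 * A.charpoly.coeff i = 0 := by rw [two_mul, ← eq_neg_iff_add_eq_zero, ← hcoeff]
  exact (mul_eq_zero.1 this).resolve_left h2

theorem exists_finset_monic_of_coeff_eq_zero [Finite K] (d : ℕ) :
    ∃ T : Finset K[X], T.card ≤ Nat.card K ^ (d / 2) ∧
      ∀ f, f ∈ T ↔ f.Monic ∧ f.natDegree = d ∧ ∀ i, i % 2 ≠ d % 2 → f.coeff i = 0 := by
  let P : Set K[X] := {f | f.Monic ∧ f.natDegree = d ∧ ∀ i, i % 2 ≠ d % 2 → f.coeff i = 0}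
  let φ (f : K[X]) (j : Fin (d / 2)) : K := f.coeff (d - 2 * (j + 1))
  have hφ : Set.InjOn φ P := by
    rintro f ⟨hf, hfd, hf0⟩ g ⟨hg, hgd, hg0⟩ h
    ext i
    rcases lt_trichotomy i d with hi | rfl | hi
    · by_cases hpar : i % 2 = d % 2
      · have := congrFun h ⟨(d - i) / 2 - 1, by omega⟩
        have hidx : d - 2 * ((d - i) / 2 - 1 + 1) = i := by omega
        simpa only [φ, hidx] using this
      · rw [hf0 i hpar, hg0 i hpar]
    · rw [← hfd, hf.coeff_natDegree, hfd, ← hgd, hg.coeff_natDegree]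
    · rw [coeff_eq_zero_of_natDegree_lt (hfd.trans_lt hi),
        coeff_eq_zero_of_natDegree_lt (hgd.trans_lt hi)]
  have hP : P.Finite := Set.Finite.of_injOn (Set.mapsTo_univ φ P) hφ Set.finite_univ
  refine ⟨hP.toFinset, ?_, fun f => hP.mem_toFinset⟩
  rw [← Set.ncard_eq_toFinset_card P hP]
  refine (Set.ncard_le_ncard_of_injOn φ (fun _ _ => Set.mem_univ _) hφ).trans ?_
  rw [Set.ncard_univ, Nat.card_fun, Nat.card_fin]

theorem sum_pow_finrank_intertwiners_le_of_isConj_neg [Finite K] (h2 : (2 : K) ≠ 0)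
    {S : Finset (Matrix n n K)} (hS : ∀ A ∈ S, IsConj A (-A)) :
    ∑ A ∈ S, Nat.card K ^ finrank K (intertwiners A A) ≤
      unitsBound (Fintype.card n ^ 2) * (Nat.card K ^ (Fintype.card n / 2) *
        (2 ^ Fintype.card n) ^ Fintype.card n * Nat.card K ^ Fintype.card n ^ 2) := by
  obtain ⟨T, hTcard, hT⟩ := exists_finset_monic_of_coeff_eq_zero (K := K) (Fintype.card n)
  refine (sum_pow_finrank_intertwiners_le (T := T)
    (fun f hf => ⟨((hT f).1 hf).1.ne_zero, ((hT f).1 hf).2.1.le⟩) fun A hA =>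
    ⟨A.charpoly, (hT _).2 ⟨A.charpoly_monic, A.charpoly_natDegree_eq_dim, fun i =>
      charpoly_coeff_eq_zero_of_isConj_neg h2 (hS A hA)⟩, A.aeval_self_charpoly⟩).trans ?_
  gcongr

-- Double counting of the pairs `(u, X)` with `-u * X = X * u`: such an `X` is conjugate to `-X`.
theorem sum_pow_finrank_intertwiners_neg_le [Finite K] (h2 : (2 : K) ≠ 0)
    {S : Finset (Matrix n n K)} (hS : ∀ A ∈ S, IsUnit A) :
    ∑ A ∈ S, Nat.card K ^ finrank K (intertwiners A (-A)) ≤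
      unitsBound (Fintype.card n ^ 2) * (Nat.card K ^ (Fintype.card n / 2) *
        (2 ^ Fintype.card n) ^ Fintype.card n * Nat.card K ^ Fintype.card n ^ 2) := by
  classical
  have := Fintype.ofFinite K
  have hcard (V : Submodule K (Matrix n n K)) :
      (Finset.univ.filter (· ∈ V)).card = Nat.card K ^ finrank K V := by
    rw [← Module.natCard_eq_pow_finrank, ← Fintype.card_subtype, ← Nat.card_eq_fintype_card]
  let T : Finset (Matrix n n K) := Finset.univ.filter fun X => IsConj X (-X)
  have hconj (A) (hA : A ∈ S) (X : Matrix n n K) (hX : X ∈ intertwiners A (-A)) : X ∈ T := by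
    obtain ⟨u, rfl⟩ := hS A hA
    refine Finset.mem_filter.2 ⟨Finset.mem_univ X, u, ?_⟩
    rw [SemiconjBy, ← mem_intertwiners.1 ((Submodule.neg_mem _ hX)), neg_mul_neg]
  calc ∑ A ∈ S, Nat.card K ^ finrank K (intertwiners A (-A))
      = ∑ A ∈ S, (T.filter (· ∈ intertwiners A (-A))).card := Finset.sum_congr rfl fun A hA => ?_
    _ = ∑ X ∈ T, (S.filter fun A => X ∈ intertwiners A (-A)).card :=
        Finset.sum_card_bipartiteAbove_eq_sum_card_bipartiteBelow _
    _ ≤ ∑ X ∈ T, Nat.card K ^ finrank K (intertwiners X X) := Finset.sum_le_sum fun X _ => ?_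
    _ ≤ _ := sum_pow_finrank_intertwiners_le_of_isConj_neg h2 fun X hX =>
        (Finset.mem_filter.1 hX).2
  · rw [← hcard]
    refine congrArg Finset.card (Finset.ext fun X => ?_)
    rw [Finset.mem_filter_univ, Finset.mem_filter]
    exact ⟨fun h => ⟨hconj A hA X h, h⟩, And.right⟩
  · refine le_trans (Finset.card_le_card fun A hA => ?_) ((hcard (intertwiners X (-X))).le.trans
      (Nat.pow_le_pow_right Nat.card_pos (finrank_intertwiners_neg_le X)))
    rw [Finset.mem_filter_univ, mem_intertwiners, neg_mul,
      ← mem_intertwiners.1 (Finset.mem_filter.1 hA).2, neg_mul, neg_neg]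

theorem sum_pow_finrank_intertwiners_le_of_sq_eq_scalar [Finite K] {S : Finset (Matrix n n K)}
    (hS : ∀ A ∈ S, ∃ a, A ^ 2 = Matrix.scalar n a) :
    ∑ A ∈ S, Nat.card K ^ finrank K (intertwiners A A) ≤
      unitsBound (Fintype.card n ^ 2) *
        (Nat.card K * (2 ^ 2) ^ Fintype.card n * Nat.card K ^ Fintype.card n ^ 2) := by
  classical
  have := Fintype.ofFinite K
  let T : Finset K[X] := Finset.univ.image fun a => X ^ 2 - C a
  have hT : T.card ≤ Nat.card K := by
    rw [Nat.card_eq_fintype_card]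
    exact Finset.card_image_le
  refine (sum_pow_finrank_intertwiners_le (T := T) (m := 2) (fun f hf => ?_) fun A hA => ?_).trans
    (by gcongr)
  · obtain ⟨a, -, rfl⟩ := Finset.mem_image.1 hf
    exact ⟨X_pow_sub_C_ne_zero two_pos a, natDegree_X_pow_sub_C.le⟩
  · obtain ⟨a, ha⟩ := hS A hA
    refine ⟨X ^ 2 - C a, Finset.mem_image_of_mem _ (Finset.mem_univ a), ?_⟩
    rw [map_sub, map_pow, aeval_X, aeval_C, ha, sub_eq_zero]
    rfl

end Counting

section InvertibleSum

variable [Finite K] {n : Type*} [Fintype n] [DecidableEq n] {s : ℝ}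

theorem sum_pow_intertwiners_neg_le_of_sq_eq_scalar (h2 : (2 : K) ≠ 0) (hs : 1 ≤ s)
    (hsq : s ^ 2 = Nat.card K) {S : Finset (Matrix n n K)} (hS : ∀ A ∈ S, IsUnit A)
    (hS' : ∀ A ∈ S, ∃ a, A ^ 2 = Matrix.scalar n a) :
    ∑ A ∈ S, s ^ (3 * finrank K (intertwiners A (-A))) ≤
      unitsBound (Fintype.card n ^ 2) * 4 ^ Fintype.card n *
        s ^ (5 * (Fintype.card n ^ 2 / 2) + 2) := by
  have hpoint (A) (hA : A ∈ S) : s ^ (3 * finrank K (intertwiners A (-A))) *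
      s ^ (2 * Fintype.card n ^ 2) ≤ (Nat.card K : ℝ) ^ finrank K (intertwiners A A) *
        s ^ (5 * (Fintype.card n ^ 2 / 2)) := by
    obtain ⟨u, rfl⟩ := hS A hA
    obtain ⟨a, ha⟩ := hS' u hA
    have hle := finrank_intertwiners_neg_le u.1
    have hadd := finrank_intertwiners_add_finrank_intertwiners_neg h2 u
    rw [ha, finrank_intertwiners_scalar, ← pow_two] at hadd
    rw [← hsq, ← pow_mul, ← pow_add, ← pow_add]
    exact pow_le_pow_right₀ hs (by omega)
  have hsum : ∑ A ∈ S, (Nat.card K : ℝ) ^ finrank K (intertwiners A A) ≤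
      unitsBound (Fintype.card n ^ 2) *
        (Nat.card K * (2 ^ 2) ^ Fintype.card n * (Nat.card K : ℝ) ^ Fintype.card n ^ 2) :=
    mod_cast sum_pow_finrank_intertwiners_le_of_sq_eq_scalar hS'
  refine le_of_mul_le_mul_right ?_ (by positivity : 0 < s ^ (2 * Fintype.card n ^ 2))
  calc (∑ A ∈ S, s ^ (3 * finrank K (intertwiners A (-A)))) * s ^ (2 * Fintype.card n ^ 2)
      ≤ (∑ A ∈ S, (Nat.card K : ℝ) ^ finrank K (intertwiners A A)) *
          s ^ (5 * (Fintype.card n ^ 2 / 2)) := by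
        rw [Finset.sum_mul, Finset.sum_mul]
        exact Finset.sum_le_sum hpoint
    _ ≤ unitsBound (Fintype.card n ^ 2) * (Nat.card K * (2 ^ 2) ^ Fintype.card n *
          (Nat.card K : ℝ) ^ Fintype.card n ^ 2) * s ^ (5 * (Fintype.card n ^ 2 / 2)) := by
        gcongr
    _ = _ := by rw [← hsq]; ring

theorem sum_pow_intertwiners_neg_le_of_sq_ne_scalar (h2 : (2 : K) ≠ 0) (hs : 1 ≤ s)
    (hsq : s ^ 2 = Nat.card K) {S : Finset (Matrix n n K)} (hS : ∀ A ∈ S, IsUnit A)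
    (hS' : ∀ A ∈ S, ∀ a, A ^ 2 ≠ Matrix.scalar n a) :
    ∑ A ∈ S, s ^ (3 * finrank K (intertwiners A (-A))) ≤
      unitsBound (Fintype.card n ^ 2) * 2 ^ Fintype.card n ^ 2 *
        s ^ (2 * Fintype.card n ^ 2 + 2 * (Fintype.card n / 2) +
          (Fintype.card n ^ 2 + 2 - 2 * Fintype.card n) / 2) := by
  set d := Fintype.card n ^ 2 + 2 - 2 * Fintype.card n
  have hpoint (A) (hA : A ∈ S) : s ^ (3 * finrank K (intertwiners A (-A))) ≤
      (Nat.card K : ℝ) ^ finrank K (intertwiners A (-A)) * s ^ (d / 2) := by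
    obtain ⟨u, rfl⟩ := hS A hA
    have hle := finrank_intertwiners_neg_le u.1
    have hadd := finrank_intertwiners_add_finrank_intertwiners_neg h2 u
    have hd := finrank_intertwiners_self_le (hS' u hA)
    rw [← hsq, ← pow_mul, ← pow_add]
    exact pow_le_pow_right₀ hs (by omega)
  have hsum : ∑ A ∈ S, (Nat.card K : ℝ) ^ finrank K (intertwiners A (-A)) ≤
      unitsBound (Fintype.card n ^ 2) * ((Nat.card K : ℝ) ^ (Fintype.card n / 2) *
        (2 ^ Fintype.card n) ^ Fintype.card n * (Nat.card K : ℝ) ^ Fintype.card n ^ 2) :=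
    mod_cast sum_pow_finrank_intertwiners_neg_le h2 hS
  calc ∑ A ∈ S, s ^ (3 * finrank K (intertwiners A (-A)))
      ≤ (∑ A ∈ S, (Nat.card K : ℝ) ^ finrank K (intertwiners A (-A))) * s ^ (d / 2) := by
        rw [Finset.sum_mul]
        exact Finset.sum_le_sum hpoint
    _ ≤ unitsBound (Fintype.card n ^ 2) * ((Nat.card K : ℝ) ^ (Fintype.card n / 2) *
          (2 ^ Fintype.card n) ^ Fintype.card n * (Nat.card K : ℝ) ^ Fintype.card n ^ 2) *
          s ^ (d / 2) := by gcongr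
    _ = _ := by rw [← hsq]; ring

theorem sum_pow_intertwiners_neg_le_of_isUnit (h2 : (2 : K) ≠ 0) (hs : 1 ≤ s)
    (hsq : s ^ 2 = Nat.card K) {S : Finset (Matrix n n K)} (hS : ∀ A ∈ S, IsUnit A) {e : ℕ}
    (he : 5 * (Fintype.card n ^ 2 / 2) + 2 ≤ e)
    (he' : 2 * Fintype.card n ^ 2 + 2 * (Fintype.card n / 2) +
      (Fintype.card n ^ 2 + 2 - 2 * Fintype.card n) / 2 ≤ e) :
    ∑ A ∈ S, s ^ (3 * finrank K (intertwiners A (-A))) ≤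
      unitsBound (Fintype.card n ^ 2) * (4 ^ Fintype.card n + 2 ^ Fintype.card n ^ 2) * s ^ e := by
  classical
  rw [← Finset.sum_filter_add_sum_filter_not S fun A => ∃ a, A ^ 2 = Matrix.scalar n a, mul_add,
    add_mul]
  refine add_le_add
    ((sum_pow_intertwiners_neg_le_of_sq_eq_scalar h2 hs hsq
      (fun A hA => hS A (Finset.mem_filter.1 hA).1)
      fun A hA => (Finset.mem_filter.1 hA).2).trans ?_)
    ((sum_pow_intertwiners_neg_le_of_sq_ne_scalar h2 hs hsq
      (fun A hA => hS A (Finset.mem_filter.1 hA).1)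
      fun A hA => not_exists.1 (Finset.mem_filter.1 hA).2).trans ?_)
  all_goals gcongr

end InvertibleSum

section RankFactorization

open Matrix

theorem card_nsmul_sum_comp_of_surjective {G H M : Type*} [AddGroup G] [AddGroup H]
    [AddCommMonoid M] [Fintype G] [Fintype H] {f : G →+ H} (hf : Function.Surjective f)
    (w : H → M) : Fintype.card H • ∑ x, w (f x) = Fintype.card G • ∑ y, w y := by
  have hleft (y : H) : ∑ x, w (f x) = ∑ x, w (y + f x) := by
    obtain ⟨z, rfl⟩ := hf y
    rw [← Equiv.sum_comp (Equiv.addLeft z) fun x => w (f x)]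
    simp only [Equiv.coe_addLeft, map_add]
  have hright (x : G) : ∑ y, w (y + f x) = ∑ y, w y := Equiv.sum_comp (Equiv.addRight (f x)) w
  calc Fintype.card H • ∑ x, w (f x) = ∑ y, ∑ x, w (y + f x) := by
        rw [← Finset.card_univ, ← Finset.sum_const]
        exact Finset.sum_congr rfl fun y _ => hleft y
    _ = Fintype.card G • ∑ y, w y := by
        rw [Finset.sum_comm, Finset.sum_congr rfl fun x _ => hright x, Finset.sum_const,
          Finset.card_univ]

variable {n : Type*} [Fintype n]

theorem exists_rank_factorization (A : Matrix n n K) {k : ℕ} (hA : A.rank = k) :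
    ∃ (P : Matrix n (Fin k) K) (Q : Matrix (Fin k) n K), P * Q = A ∧
      (∃ L : Matrix (Fin k) n K, L * P = 1) ∧ ∃ R : Matrix n (Fin k) K, Q * R = 1 := by
  classical
  subst hA
  obtain ⟨_, _, e, ⟨v, rfl⟩, ⟨u, rfl⟩, hA⟩ := Matrix.exists_rank_normal_form A
  let J : Matrix n (Fin A.rank) K := (Matrix.fromRows 1 0).submatrix e id
  let J' : Matrix (Fin A.rank) n K := (Matrix.fromCols 1 0).submatrix id e
  have hJJ' : J * J' = v.1 * A * u.1 := by
    rw [hA, ← Matrix.submatrix_mul _ _ e id e Function.bijective_id,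
      Matrix.fromRows_mul_fromCols]
    simp
  have hJ'J : J' * J = 1 := by
    rw [Matrix.submatrix_mul_equiv, Matrix.fromCols_mul_fromRows]
    simp
  refine ⟨v⁻¹.1 * J, J' * u⁻¹.1, ?_, ⟨J' * v.1, ?_⟩, ⟨u.1 * J, ?_⟩⟩
  · rw [Matrix.mul_assoc, ← Matrix.mul_assoc J, hJJ', Matrix.mul_assoc, Matrix.mul_assoc,
      Units.mul_inv, Matrix.mul_one, ← Matrix.mul_assoc, Units.inv_mul, Matrix.one_mul]
  · rw [Matrix.mul_assoc, ← Matrix.mul_assoc v.1, Units.mul_inv, Matrix.one_mul, hJ'J]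
  · rw [Matrix.mul_assoc, ← Matrix.mul_assoc u⁻¹.1, Units.inv_mul, Matrix.one_mul, hJ'J]

variable [DecidableEq n]

theorem card_mul_sum_mul_left [Fintype K] {k : Type*} [Fintype k] [DecidableEq k]
    {Q : Matrix k n K} {R : Matrix n k K} (hQ : Q * R = 1) (v : Matrix k k K → ℝ) :
    Fintype.card (Matrix k k K) * ∑ P : Matrix n k K, v (Q * P) =
      Fintype.card (Matrix n k K) * ∑ Y, v Y := by
  have hsurj : Function.Surjective (addMonoidHomMulLeft Q : Matrix n k K →+ Matrix k k K) :=
    fun Y => ⟨R * Y, by simp [← Matrix.mul_assoc, hQ]⟩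
  simpa only [nsmul_eq_mul, addMonoidHomMulLeft_apply] using
    card_nsmul_sum_comp_of_surjective hsurj v

-- A matrix of rank `k` has at least `|GL_k|` factorizations `P * Q`, and for a fixed `Q` of
-- full rank the products `Q * P` are equidistributed.
theorem card_units_mul_sum_le [Fintype K] [DecidableEq K] {k : ℕ} {S : Finset (Matrix n n K)}
    (hS : ∀ A ∈ S, A.rank = k) {w : Matrix n n K → ℝ} {v : Matrix (Fin k) (Fin k) K → ℝ}
    (hv : ∀ Y, 0 ≤ v Y) (hwv : ∀ (P : Matrix n (Fin k) K) (Q : Matrix (Fin k) n K),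
      (∃ L : Matrix (Fin k) n K, L * P = 1) → (∃ R : Matrix n (Fin k) K, Q * R = 1) →
      w (P * Q) ≤ v (Q * P)) :
    Fintype.card (Matrix (Fin k) (Fin k) K)ˣ * ∑ A ∈ S, w A ≤
      ∑ Q : Matrix (Fin k) n K with
          ∃ R : Matrix n (Fin k) K, (Q * R : Matrix (Fin k) (Fin k) K) = 1,
        ∑ P : Matrix n (Fin k) K, v (Q * P) := by
  choose! P Q hPQ hP hQ using fun A (hA : A ∈ S) => exists_rank_factorization A (hS A hA)
  choose! L hL using hP
  choose! R hR using hQ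
  let φ (p : Matrix n n K × (Matrix (Fin k) (Fin k) K)ˣ) :
      Matrix (Fin k) n K × Matrix n (Fin k) K := (p.2⁻¹.1 * Q p.1, P p.1 * p.2.1)
  have hφmul (A) (hA : A ∈ S) (g) : (φ (A, g)).2 * (φ (A, g)).1 = A := by
    rw [Matrix.mul_assoc, ← Matrix.mul_assoc g.1, Units.mul_inv, Matrix.one_mul, hPQ A hA]
  have hφR (A) (hA : A ∈ S) (g) : (φ (A, g)).1 * (R A * g.1) = 1 := by
    rw [Matrix.mul_assoc, ← Matrix.mul_assoc (Q A), hR A hA, Matrix.one_mul, Units.inv_mul]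
  have hφL (A) (hA : A ∈ S) (g) : g⁻¹.1 * L A * (φ (A, g)).2 = 1 := by
    rw [Matrix.mul_assoc, ← Matrix.mul_assoc (L A), hL A hA, Matrix.one_mul, Units.inv_mul]
  have hφinj : Set.InjOn φ ↑(S ×ˢ (Finset.univ : Finset (Matrix (Fin k) (Fin k) K)ˣ)) := by
    rintro ⟨A, g⟩ hp ⟨A', g'⟩ hp' h
    have hA : A ∈ S := (Finset.mem_product.1 hp).1
    obtain rfl : A = A' := by
      rw [← hφmul A hA g, h, hφmul A' (Finset.mem_product.1 hp').1 g']
    have hg := congrArg (L A * ·) (Prod.ext_iff.1 h).2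
    simp only [φ, ← Matrix.mul_assoc, hL A hA, Matrix.one_mul] at hg
    rw [Units.ext hg]
  calc Fintype.card (Matrix (Fin k) (Fin k) K)ˣ * ∑ A ∈ S, w A
      = ∑ p ∈ S ×ˢ (Finset.univ : Finset (Matrix (Fin k) (Fin k) K)ˣ), w p.1 := by
        rw [Finset.sum_product_right]
        simp
    _ ≤ ∑ p ∈ S ×ˢ Finset.univ, v ((φ p).1 * (φ p).2) := by
        refine Finset.sum_le_sum fun ⟨A, g⟩ hp => ?_
        have hA : A ∈ S := (Finset.mem_product.1 hp).1
        exact (congrArg w (hφmul A hA g)).ge.trans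
          (hwv _ _ ⟨_, hφL A hA g⟩ ⟨_, hφR A hA g⟩)
    _ = ∑ p ∈ (S ×ˢ Finset.univ).image φ, v (p.1 * p.2) :=
        (Finset.sum_image (f := fun p => v (p.1 * p.2)) hφinj).symm
    _ ≤ _ := by
        rw [← Finset.sum_product']
        refine Finset.sum_le_sum_of_subset_of_nonneg (fun p hp => ?_) fun _ _ _ => hv _
        obtain ⟨⟨A, g⟩, hAg, rfl⟩ := Finset.mem_image.1 hp
        have hA : A ∈ S := (Finset.mem_product.1 hAg).1
        exact Finset.mem_product.2 ⟨Finset.mem_filter.2 ⟨Finset.mem_univ _, _, hφR A hA g⟩,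
          Finset.mem_univ _⟩

theorem card_matrix [Fintype K] {m : Type*} [Fintype m] [DecidableEq m] :
    Fintype.card (Matrix m n K) = Nat.card K ^ (Fintype.card m * Fintype.card n) := by
  rw [← Nat.card_eq_fintype_card, Module.natCard_eq_pow_finrank (K := K), finrank_matrix,
    finrank_self, mul_one]

theorem pow_mul_sum_sum_mul_left_le [Fintype K] [DecidableEq K] {k : ℕ}
    {v : Matrix (Fin k) (Fin k) K → ℝ} (hv : ∀ Y, 0 ≤ v Y) :
    (Nat.card K : ℝ) ^ k ^ 2 *
      ∑ Q : Matrix (Fin k) n K with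
          ∃ R : Matrix n (Fin k) K, (Q * R : Matrix (Fin k) (Fin k) K) = 1,
        ∑ P : Matrix n (Fin k) K, v (Q * P) ≤
      (Nat.card K : ℝ) ^ (2 * (Fintype.card n * k)) * ∑ Y, v Y := by
  have hfiber (Q : Matrix (Fin k) n K) (R : Matrix n (Fin k) K) (hQ : Q * R = 1) :
      (Nat.card K : ℝ) ^ k ^ 2 * ∑ P : Matrix n (Fin k) K, v (Q * P) =
        (Nat.card K : ℝ) ^ (Fintype.card n * k) * ∑ Y, v Y := by
    simpa only [card_matrix, Fintype.card_fin, Nat.cast_pow, ← pow_two] using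
      card_mul_sum_mul_left hQ v
  rw [Finset.mul_sum, two_mul, pow_add, mul_assoc]
  refine (Finset.sum_le_card_nsmul _ _ _ fun Q hQ =>
    (hfiber Q _ (Finset.mem_filter.1 hQ).2.choose_spec).le).trans ?_
  rw [nsmul_eq_mul]
  gcongr
  · exact mul_nonneg (by positivity) (Finset.sum_nonneg fun Y _ => hv Y)
  · calc _ ≤ (Fintype.card (Matrix (Fin k) n K) : ℝ) := mod_cast Finset.card_le_univ _
      _ = _ := by rw [card_matrix, Fintype.card_fin, mul_comm, Nat.cast_pow]

end RankFactorization

section RankReduction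

open Matrix

variable [Fintype K] {n : Type*} [Fintype n]

theorem pow_mul_sum_le_of_rank_eq {k : ℕ} {S : Finset (Matrix n n K)}
    (hS : ∀ A ∈ S, A.rank = k) {w : Matrix n n K → ℝ} {v : Matrix (Fin k) (Fin k) K → ℝ}
    (hw : ∀ A, 0 ≤ w A) (hv : ∀ Y, 0 ≤ v Y)
    (hwv : ∀ (P : Matrix n (Fin k) K) (Q : Matrix (Fin k) n K),
      (∃ L : Matrix (Fin k) n K, L * P = 1) → (∃ R : Matrix n (Fin k) K, Q * R = 1) →
      w (P * Q) ≤ v (Q * P)) :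
    (Nat.card K : ℝ) ^ (2 * k ^ 2) * ∑ A ∈ S, w A ≤
      unitsBound (k ^ 2) * (Nat.card K : ℝ) ^ (2 * (Fintype.card n * k)) * ∑ Y, v Y := by
  classical
  have hunits : (Nat.card K : ℝ) ^ k ^ 2 ≤
      unitsBound (k ^ 2) * Fintype.card (Matrix (Fin k) (Fin k) K)ˣ := by
    have h := natCard_le_unitsBound_mul (K := K) (Matrix (Fin k) (Fin k) K)
    rw [finrank_matrix_self, Module.natCard_eq_pow_finrank (K := K), finrank_matrix_self,
      Fintype.card_fin, Nat.card_eq_fintype_card (α := (Matrix (Fin k) (Fin k) K)ˣ)] at h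
    exact_mod_cast h
  have hsum := card_units_mul_sum_le hS hv hwv
  calc (Nat.card K : ℝ) ^ (2 * k ^ 2) * ∑ A ∈ S, w A
      = (Nat.card K : ℝ) ^ k ^ 2 * ((Nat.card K : ℝ) ^ k ^ 2 * ∑ A ∈ S, w A) := by ring
    _ ≤ (Nat.card K : ℝ) ^ k ^ 2 * (unitsBound (k ^ 2) *
          Fintype.card (Matrix (Fin k) (Fin k) K)ˣ * ∑ A ∈ S, w A) := by
        gcongr
        exact Finset.sum_nonneg fun A _ => hw A
    _ = unitsBound (k ^ 2) * ((Nat.card K : ℝ) ^ k ^ 2 *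
          (Fintype.card (Matrix (Fin k) (Fin k) K)ˣ * ∑ A ∈ S, w A)) := by ring
    _ ≤ unitsBound (k ^ 2) * ((Nat.card K : ℝ) ^ (2 * (Fintype.card n * k)) * ∑ Y, v Y) :=
        mul_le_mul_of_nonneg_left ((mul_le_mul_of_nonneg_left hsum (by positivity)).trans
          (pow_mul_sum_sum_mul_left_le hv)) (by positivity)
    _ = _ := (mul_assoc _ _ _).symm

theorem pow_mul_sum_pow_intertwiners_neg_le {s : ℝ} (hs : 1 ≤ s) (hsq : s ^ 2 = Nat.card K)
    {k : ℕ} {S : Finset (Matrix n n K)} (hS : ∀ A ∈ S, A.rank = k) :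
    s ^ (4 * k ^ 2) * ∑ A ∈ S, s ^ (3 * finrank K (intertwiners A (-A))) ≤
      unitsBound (k ^ 2) *
        s ^ (4 * (Fintype.card n * k) + 3 * (Fintype.card n - k) ^ 2) *
        ∑ Y : Matrix (Fin k) (Fin k) K, s ^ (3 * finrank K (intertwiners Y (-Y))) := by
  have : 0 ≤ s := zero_le_one.trans hs
  have hPQ (P : Matrix n (Fin k) K) (Q : Matrix (Fin k) n K)
      (hP : ∃ L : Matrix (Fin k) n K, L * P = 1) (hQ : ∃ R : Matrix n (Fin k) K, Q * R = 1) :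
      s ^ (3 * finrank K (intertwiners (P * Q) (-(P * Q)))) ≤
        s ^ (3 * (Fintype.card n - k) ^ 2) *
          s ^ (3 * finrank K (intertwiners (Q * P) (-(Q * P)))) := by
    obtain ⟨L, hL⟩ := hP
    obtain ⟨R, hR⟩ := hQ
    have h := finrank_intertwiners_mul_le (P' := -P) (L' := -L) hL hR
      (by rw [Matrix.neg_mul, Matrix.mul_neg, neg_neg, hL]) hR
    rw [Matrix.neg_mul, Matrix.mul_neg, Fintype.card_fin, ← pow_two] at h
    rw [← pow_add]
    exact pow_le_pow_right₀ hs (by omega)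
  have h := pow_mul_sum_le_of_rank_eq hS
    (w := fun A => s ^ (3 * finrank K (intertwiners A (-A))))
    (v := fun Y => s ^ (3 * (Fintype.card n - k) ^ 2) * s ^ (3 * finrank K (intertwiners Y (-Y))))
    (fun A => by positivity) (fun Y => by positivity) hPQ
  rw [← hsq, ← Finset.mul_sum] at h
  convert h using 1 <;> ring

theorem sum_pow_intertwiners_neg_le_of_rank_eq {s : ℝ} (hs : 1 ≤ s) (hsq : s ^ 2 = Nat.card K)
    {k : ℕ} {S : Finset (Matrix n n K)} (hS : ∀ A ∈ S, A.rank = k) (hk : k ≤ Fintype.card n) {c : ℝ}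
    (hc : ∑ Y : Matrix (Fin k) (Fin k) K, s ^ (3 * finrank K (intertwiners Y (-Y))) ≤
      c * s ^ (3 * k ^ 2)) {e : ℕ}
    (he : S.Nonempty → 3 * Fintype.card n ^ 2 ≤ e + 2 * (k * (Fintype.card n - k))) :
    ∑ A ∈ S, s ^ (3 * finrank K (intertwiners A (-A))) ≤ unitsBound (k ^ 2) * c * s ^ e := by
  have : 0 < s := zero_lt_one.trans_le hs
  have hc0 : 0 ≤ c := nonneg_of_mul_nonneg_left
    ((Finset.sum_nonneg fun Y _ => by positivity).trans hc) (by positivity)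
  rcases S.eq_empty_or_nonempty with rfl | hne
  · rw [Finset.sum_empty]
    positivity
  replace he := he hne
  obtain ⟨m, hm⟩ := Nat.exists_eq_add_of_le hk
  rw [hm, Nat.add_sub_cancel_left] at he
  refine le_of_mul_le_mul_left ?_ (by positivity : 0 < s ^ (4 * k ^ 2))
  calc s ^ (4 * k ^ 2) * ∑ A ∈ S, s ^ (3 * finrank K (intertwiners A (-A)))
      ≤ unitsBound (k ^ 2) * s ^ (4 * ((k + m) * k) + 3 * m ^ 2) * (c * s ^ (3 * k ^ 2)) := by
        refine (pow_mul_sum_pow_intertwiners_neg_le hs hsq hS).trans ?_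
        rw [hm, Nat.add_sub_cancel_left]
        gcongr
    _ = unitsBound (k ^ 2) * c * s ^ (4 * ((k + m) * k) + 3 * m ^ 2 + 3 * k ^ 2) := by ring
    _ ≤ unitsBound (k ^ 2) * c * s ^ (4 * k ^ 2 + e) := by
        exact mul_le_mul_of_nonneg_left (pow_le_pow_right₀ hs (by nlinarith)) (by positivity)
    _ = _ := by ring

end RankReduction

section Sums

theorem sum_pow_intertwiners_neg_le [Fintype K] (h2 : (2 : K) ≠ 0) {s : ℝ} (hs : 1 ≤ s)
    (hsq : s ^ 2 = Nat.card K) {n e : ℕ} (he : 5 * (n ^ 2 / 2) + 2 ≤ e)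
    (he' : 2 * n ^ 2 + 2 * (n / 2) + (n ^ 2 + 2 - 2 * n) / 2 ≤ e)
    {S : Finset (Matrix (Fin n) (Fin n) K)}
    (hS : ∀ A ∈ S, A.rank < n → 3 * n ^ 2 ≤ e + 2 * (A.rank * (n - A.rank))) {c : ℕ → ℝ}
    (hc : ∀ k < n, ∑ Y : Matrix (Fin k) (Fin k) K, s ^ (3 * finrank K (intertwiners Y (-Y))) ≤
      c k * s ^ (3 * k ^ 2)) :
    ∑ A ∈ S, s ^ (3 * finrank K (intertwiners A (-A))) ≤
      (∑ k ∈ Finset.range n, unitsBound (k ^ 2) * c k +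
        unitsBound (n ^ 2) * (4 ^ n + 2 ^ n ^ 2)) * s ^ e := by
  rw [← Finset.sum_fiberwise_of_maps_to (t := Finset.range (n + 1)) (g := Matrix.rank)
    fun A _ => Finset.mem_range_succ_iff.2 A.rank_le_width, Finset.sum_range_succ, add_mul,
    Finset.sum_mul]
  refine add_le_add (Finset.sum_le_sum fun k hk => ?_) ?_
  · have hk := Finset.mem_range.1 hk
    refine sum_pow_intertwiners_neg_le_of_rank_eq hs hsq (fun A hA => (Finset.mem_filter.1 hA).2)
      (by rw [Fintype.card_fin]; exact hk.le) (hc k hk) fun ⟨A, hA⟩ => ?_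
    obtain ⟨hAS, rfl⟩ := Finset.mem_filter.1 hA
    rw [Fintype.card_fin]
    exact hS A hAS hk
  · have hunit (A) (hA : A ∈ S.filter fun A => A.rank = n) : IsUnit A := by
      rw [← Matrix.linearIndependent_cols_iff_isUnit, linearIndependent_iff_card_eq_finrank_span,
        Set.finrank, ← Matrix.rank_eq_finrank_span_cols, (Finset.mem_filter.1 hA).2,
        Fintype.card_fin]
    simpa only [Fintype.card_fin] using
      sum_pow_intertwiners_neg_le_of_isUnit h2 hs hsq hunit (e := e)
        (by rwa [Fintype.card_fin]) (by rwa [Fintype.card_fin])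

theorem one_le_sqrt_natCard (K : Type*) [Field K] [Finite K] : 1 ≤ √(Nat.card K : ℝ) :=
  Real.one_le_sqrt.2 (mod_cast Nat.card_pos)

theorem exists_sum_pow_intertwiners_neg_le (n : ℕ) :
    ∃ c : ℝ, ∀ (K : Type u) [Field K] [Fintype K], (2 : K) ≠ 0 →
      ∑ A : Matrix (Fin n) (Fin n) K, √(Nat.card K) ^ (3 * finrank K (intertwiners A (-A))) ≤
        c * √(Nat.card K) ^ (3 * n ^ 2) := by
  induction n using Nat.strong_induction_on with
  | _ n ih =>
    choose! c hc using ih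
    rcases n.eq_zero_or_pos with rfl | hn
    · exact ⟨1, fun K _ _ _ => by
        simp [finrank_zero_of_subsingleton, ← Nat.card_eq_fintype_card]⟩
    refine ⟨_, fun K _ _ h2 => sum_pow_intertwiners_neg_le h2 (one_le_sqrt_natCard K)
      (Real.sq_sqrt (Nat.cast_nonneg _)) ?_ ?_ (fun A _ _ => Nat.le_add_right _ _)
      fun k hk => hc k hk K h2⟩
    all_goals
      rcases (Nat.succ_le_of_lt hn).eq_or_lt with rfl | hn'
      · norm_num
      have : 2 * n ≤ n ^ 2 := by nlinarith
      omega

theorem exists_sum_ne_zero_pow_intertwiners_neg_le {n : ℕ} (hn : 3 ≤ n) :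
    ∃ c : ℝ, ∀ (K : Type u) [Field K] [Fintype K], (2 : K) ≠ 0 →
      ∀ S : Finset (Matrix (Fin n) (Fin n) K), 0 ∉ S →
      ∑ A ∈ S, √(Nat.card K) ^ (3 * finrank K (intertwiners A (-A))) ≤
        c * √(Nat.card K) ^ (3 * n ^ 2 + 2 - 2 * n) := by
  choose c hc using exists_sum_pow_intertwiners_neg_le.{u}
  refine ⟨_, fun K _ _ h2 S hS => sum_pow_intertwiners_neg_le h2 (one_le_sqrt_natCard K)
    (Real.sq_sqrt (Nat.cast_nonneg _)) ?_ ?_ (fun A hA hAn => ?_) fun k _ => hc k K h2⟩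
  iterate 2
    rcases hn.eq_or_lt with rfl | hn
    · norm_num
    have : 4 * n ≤ n ^ 2 := by nlinarith
    omega
  · have hA0 : 0 < A.rank := Nat.pos_of_ne_zero fun h => ne_of_mem_of_not_mem hA hS (by
      obtain ⟨P, Q, rfl, -⟩ := exists_rank_factorization A h
      ext i j
      rw [Matrix.mul_apply, Finset.univ_eq_empty, Finset.sum_empty, Matrix.zero_apply])
    have hrank := Nat.add_sub_one_le_mul hA0.ne' (Nat.sub_pos_of_lt hAn).ne'
    omega

-- The exponent of `√q` for `r = t + 3`: the sum for `r = 3` without `q ^ (3 n² / 2)`, the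
-- factor `q ^ (r n² / 2)`, and `ρ ≤ n² - 2n + 2` for the remaining `t` factors `q ^ (ρ / 2)`.
theorem exponent_add_eq {n : ℕ} (hn : 1 ≤ n) (t : ℕ) :
    3 * n ^ 2 + 2 - 2 * n + ((t + 3) * n ^ 2 + t * (n ^ 2 + 2 - 2 * n)) =
      2 * ((t + 3) * n ^ 2 - (n - 1) * (t + 1)) := by
  obtain ⟨m, rfl⟩ := Nat.exists_eq_add_of_le' hn
  have hleft : 3 * (m + 1) ^ 2 + 2 - 2 * (m + 1) = 3 * m ^ 2 + 4 * m + 3 :=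
    Nat.sub_eq_of_eq_add (by ring)
  have hmid : (m + 1) ^ 2 + 2 - 2 * (m + 1) = m ^ 2 + 1 := Nat.sub_eq_of_eq_add (by ring)
  have hright : (t + 3) * (m + 1) ^ 2 - m * (t + 1) =
      t * (m ^ 2 + m + 1) + (3 * m ^ 2 + 5 * m + 3) := Nat.sub_eq_of_eq_add (by ring)
  rw [hleft, hmid, Nat.add_sub_cancel, hright]
  ring

theorem natCast_mul_sq_sub_mul {n r : ℕ} (hn : 1 ≤ n) (hr : 2 ≤ r) :
    ((r * n ^ 2 - (n - 1) * (r - 2) : ℕ) : ℤ) = r * n ^ 2 - (n - 1) * (r - 2) := by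
  have hle : (n - 1) * (r - 2) ≤ r * n ^ 2 := by
    rw [mul_comm r]
    exact Nat.mul_le_mul ((Nat.sub_le n 1).trans (Nat.le_self_pow two_ne_zero n)) (Nat.sub_le r 2)
  push_cast [hle, hn, hr]
  ring

theorem exists_sum_ne_zero_pow_mul_le {n r : ℕ} (hn : 3 ≤ n) (hr : 3 ≤ r) :
    ∃ c : ℝ, ∀ (K : Type u) [Field K] [Fintype K], (2 : K) ≠ 0 →
      ∀ S : Finset (Matrix (Fin n) (Fin n) K), 0 ∉ S →
      ∑ A ∈ S, √(Nat.card K) ^ (r * (n ^ 2 + finrank K (intertwiners A (-A)))) ≤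
        c * √(Nat.card K) ^ (2 * (r * n ^ 2 - (n - 1) * (r - 2))) := by
  obtain ⟨c, hc⟩ := exists_sum_ne_zero_pow_intertwiners_neg_le.{u} hn
  refine ⟨c, fun K _ _ h2 S hS => ?_⟩
  obtain ⟨t, rfl⟩ := Nat.exists_eq_add_of_le' hr
  set s := √(Nat.card K : ℝ)
  set d := n ^ 2 + 2 - 2 * n with hd
  have hpoint (A) (hA : A ∈ S) :
      s ^ ((t + 3) * (n ^ 2 + finrank K (intertwiners A (-A)))) ≤
        s ^ (3 * finrank K (intertwiners A (-A))) * s ^ ((t + 3) * n ^ 2 + t * d) := by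
    have hle := Nat.mul_le_mul_left t
      (finrank_intertwiners_neg_le_of_ne_zero h2 (ne_of_mem_of_not_mem hA hS))
    rw [Fintype.card_fin, ← hd] at hle
    rw [← pow_add]
    exact pow_le_pow_right₀ (one_le_sqrt_natCard K) (by linarith)
  calc ∑ A ∈ S, s ^ ((t + 3) * (n ^ 2 + finrank K (intertwiners A (-A))))
      ≤ (∑ A ∈ S, s ^ (3 * finrank K (intertwiners A (-A)))) *
          s ^ ((t + 3) * n ^ 2 + t * d) := by
        rw [Finset.sum_mul]
        exact Finset.sum_le_sum hpoint
    _ ≤ c * s ^ (3 * n ^ 2 + 2 - 2 * n) * s ^ ((t + 3) * n ^ 2 + t * d) := by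
        gcongr
        exact hc K h2 S hS
    _ = c * s ^ (2 * ((t + 3) * n ^ 2 - (n - 1) * (t + 1))) := by
        rw [mul_assoc, ← pow_add, exponent_add_eq (by omega)]

theorem radical_eq_intertwiners {F : Type} [Field F] [Fintype F] {n : ℕ}
    (A : Matrix (Fin n) (Fin n) F) : radical F A = intertwiners A (-A) := by
  have htrace (X Y : Matrix (Fin n) (Fin n) F) :
      (A * (X * Y + Y * X)).trace = ((A * X + X * A) * Y).trace := by
    rw [mul_add, add_mul, Matrix.trace_add, Matrix.trace_add, mul_assoc, ← mul_assoc A Y,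
      Matrix.trace_mul_comm (A * Y), mul_assoc X]
  ext X
  calc X ∈ radical F A ↔ A * X + X * A = 0 := by
        simp only [Matrix.ext_iff_trace_mul_right, zero_mul, Matrix.trace_zero, ← htrace]
        rfl
    _ ↔ X ∈ intertwiners A (-A) := by
        rw [mem_intertwiners, neg_mul, neg_eq_iff_add_eq_zero]

end Sums

/-- Lemma 5.6: for `n ≥ 3`, `r ≥ 3`,
`Σ_{S ≠ 0 in M_n(F_q)} q^{r(n²+ρ_S)/2} ≤ c q^{rn² - (n-1)(r-2)}` uniformly over odd `q`. -/
theorem rho_sum_general_rank (n r : ℕ) (hn : 3 ≤ n) (hr : 3 ≤ r) :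
    ∃ c : ℝ, 0 < c ∧
      ∀ (F : Type) [Field F] [Fintype F] [DecidableEq F],
        Odd (Fintype.card F) →
        ∑ S ∈ Finset.univ.filter (fun S : Matrix (Fin n) (Fin n) F => S ≠ 0),
            (Fintype.card F : ℝ) ^ ((r : ℝ) * ((n : ℝ) ^ 2 + (rho F S : ℝ)) / 2) ≤
          c * (Fintype.card F : ℝ) ^
            ((r : ℤ) * (n : ℤ) ^ 2 - ((n : ℤ) - 1) * ((r : ℤ) - 2)) := by
  obtain ⟨c, hc⟩ := exists_sum_ne_zero_pow_mul_le.{0} hn hr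
  refine ⟨max c 1, lt_max_of_lt_right one_pos, fun F _ _ _ hodd => ?_⟩
  have h2 : (2 : F) ≠ 0 := Ring.two_ne_zero fun h =>
    Nat.not_even_iff_odd.2 hodd (Nat.even_iff.2 (FiniteField.even_card_of_char_two h))
  calc _ = ∑ S ∈ Finset.univ.filter (fun S : Matrix (Fin n) (Fin n) F => S ≠ 0),
        √(Nat.card F) ^ (r * (n ^ 2 + finrank F (intertwiners S (-S)))) :=
        Finset.sum_congr rfl fun S _ => by
          rw [← radical_eq_intertwiners, ← rho, Nat.card_eq_fintype_card,
            Real.rpow_div_two_eq_sqrt _ (Nat.cast_nonneg _)]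
          exact_mod_cast Real.rpow_natCast _ (r * (n ^ 2 + rho F S))
    _ ≤ c * √(Nat.card F) ^ (2 * (r * n ^ 2 - (n - 1) * (r - 2))) := hc F h2 _ (by simp)
    _ ≤ max c 1 * √(Nat.card F) ^ (2 * (r * n ^ 2 - (n - 1) * (r - 2))) := by
      gcongr
      exact le_max_left c 1
    _ = _ := by
      rw [← natCast_mul_sq_sub_mul (by omega) (by omega), zpow_natCast, pow_mul,
        Real.sq_sqrt (Nat.cast_nonneg _), Nat.card_eq_fintype_card]
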